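/- Let G = (V,E) be a d-rigid graph that has a generic framework (G,p) in ℝ^d with a PSD equilibrium stress of rank |V| − d − 2. Suppose G' = (V',E') is a d-rigid d-circuit obtained from G by a d-dimensional 1-extension. Then there exists a generic framework (G',p') in ℝ^d with a PSD equilibrium stress of rank at least |V'| − d − 2. -/

import Mathlib

/-!
Let `X` be the set of the `d + 1` neighbours of the new vertex, let `H` be `G` without the edge `xy`,
so that `G'` without its new vertex is `H`, and fix a generic `p` on `V`. Since `G'` is a circuit, `H`
is independent. Specialising the new vertex of `G'` to the midpoint of `p a` and `p b`, for `a, b` in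
`X`, turns a stress of `G'` into a stress `τ_ab` of `H + ab`, which can be normalised to be `1` at `ab`
(`exists_isTau`); it is unique, and the given stress of `G`
is a multiple of `τ_xy`, nonzero unless `|V| = d + 2` (`exists_sign`). For `|V| ≤ d + 1` there is nothing
to prove.

A position `z` of the new vertex is recorded by its barycentric coordinates `λ` with respect to `X`.
The stress of `G'` there can be written explicitly: with `N(λ) = ½ ∑ λ_a λ_b τ_ab`, its quadratic form
is `N(λ)(y, y) + (∑ λ_v y_v - y_new)²` (`stress_extWeight`, `form_extWeight`). Its kernel therefore
embeds in that of `N(λ)` whenever `N(λ)` is positive semidefinite, and it suffices to find an open set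
of `λ` for which `N(λ)` is positive semidefinite with kernel of dimension at most `d + 2`; a generic
`z` is then chosen in this open set (`Gen.extend`).

If `λ` is supported on `x, y` then `N(λ) = λ_x λ_y τ_xy`, which has the right sign for a suitable sign
of `λ_x λ_y`, and its kernel `K` consists of the affine functions and at most one further vector `k`.
Perturbing `λ` preserves positivity outside `K` by compactness (`eventually_pos`), so only the values
`τ_ab(k, k)` matter. The crucial fact is a dichotomy (`IsTau.lap_eq_zero_of_form`): if
`τ_ab(k, k) = 0` then `τ_ab k = 0`. Hence either all `τ_ab` kill `K`, and `N(λ)` stays positive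
semidefinite with kernel `K` for `λ` in an open set, or some `λ` close to the edge `xy` makes `N(λ)`
positive outside the affine functions (`exists_good`), which is an open condition.

The dichotomy rests on genericity, used through derivations of `ℝ` with prescribed values at the
coordinates of `p` (`exists_derivation`). If `τ_ab(k, k) = 0`, duality gives a velocity field `m` with
`⟨p_i - p_j, m_i - m_j⟩ = (k_i - k_j)²` on the edges of `H + ab`. Differentiating the equilibrium
equations of `τ_xy` shows that the coordinates of `m` lie in `K` (`exists_kernel_velocity`), so `m` is
affine in `p` and `k`. After completing a square, `(k_i - k_j)²` is a quadratic form in `p_i - p_j` on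
the edges, and specialising `p` to a configuration having `k` as a coordinate yields `τ_ab k = 0`
(`IsTau.eq_of_quadric`).
-/

/-!
Common rigidity-theoretic definitions, following the paper
"Computing maximum likelihood thresholds using graph rigidity".
-/

open scoped BigOperators

section Defs

variable {V : Type*}

/-- A configuration in `ℝ^d` is *generic* if the collection of all of its coordinates
is algebraically independent over `ℚ`. -/
def Generic {d : ℕ} (p : V → EuclideanSpace ℝ (Fin d)) : Prop :=
  AlgebraicIndependent ℚ (fun vi : V × Fin d => p vi.1 vi.2)

/-- `ω` is an equilibrium stress of the framework `(G, p)`: it is symmetric, supported on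
the edges of `G`, and satisfies the equilibrium condition at every vertex. -/
def IsEqStress [Fintype V] (G : SimpleGraph V) {d : ℕ}
    (p : V → EuclideanSpace ℝ (Fin d)) (ω : V → V → ℝ) : Prop :=
  (∀ i j, ω i j = ω j i) ∧
  (∀ i j, ¬ G.Adj i j → ω i j = 0) ∧
  (∀ i, ∑ j, ω i j • (p j - p i) = 0)

/-- The stress matrix associated to a stress `ω`:  off-diagonal entries are `-ω i j`
(which vanish off the edges of the graph) and the diagonal entry at `i` is `∑ k, ω i k`. -/
def stressMatrix [Fintype V] [DecidableEq V] (ω : V → V → ℝ) : Matrix V V ℝ :=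
  fun i j => if i = j then ∑ k, ω i k else - ω i j

/-- The maximum likelihood threshold of `G` (via its rigidity-theoretic characterization):
`d + 1` where `d` is the smallest dimension in which no generic framework `(G, p)` supports
a nonzero PSD equilibrium stress. -/
noncomputable def mlt [Fintype V] [DecidableEq V] (G : SimpleGraph V) : ℕ :=
  sInf {d : ℕ | ∀ p : V → EuclideanSpace ℝ (Fin d), Generic p →
    ∀ ω : V → V → ℝ, IsEqStress G p ω → (stressMatrix ω).PosSemidef → ω = 0} + 1

/-- The generic completion rank of `G`: `d + 1` where `d` is the smallest dimension in
which no generic framework `(G, p)` supports a nonzero equilibrium stress. -/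
noncomputable def gcr [Fintype V] (G : SimpleGraph V) : ℕ :=
  sInf {d : ℕ | ∀ p : V → EuclideanSpace ℝ (Fin d), Generic p →
    ∀ ω : V → V → ℝ, IsEqStress G p ω → ω = 0} + 1

/-- Two frameworks `(G, p)` and `(G, q)` are equivalent: corresponding edge lengths agree. -/
def FrameworkEquiv {d : ℕ} (G : SimpleGraph V) (p q : V → EuclideanSpace ℝ (Fin d)) : Prop :=
  ∀ ⦃u v⦄, G.Adj u v → dist (p u) (p v) = dist (q u) (q v)

/-- Two configurations are congruent: related by a Euclidean isometry of `ℝ^d`. -/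
def FrameworkCongruent {d : ℕ} (p q : V → EuclideanSpace ℝ (Fin d)) : Prop :=
  ∃ T : EuclideanSpace ℝ (Fin d) → EuclideanSpace ℝ (Fin d), Isometry T ∧ q = T ∘ p

/-- A framework is globally rigid if every equivalent framework is congruent to it. -/
def GloballyRigidFramework {d : ℕ} (G : SimpleGraph V)
    (p : V → EuclideanSpace ℝ (Fin d)) : Prop :=
  ∀ q : V → EuclideanSpace ℝ (Fin d), FrameworkEquiv G p q → FrameworkCongruent p q

/-- A framework is rigid if every equivalent framework in some neighborhood of `p`
is congruent to it. -/
def RigidFramework {d : ℕ} (G : SimpleGraph V)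
    (p : V → EuclideanSpace ℝ (Fin d)) : Prop :=
  ∃ U ∈ nhds p, ∀ q ∈ U, FrameworkEquiv G p q → FrameworkCongruent p q

/-- A graph is `d`-rigid if every generic framework in `ℝ^d` is rigid. -/
def IsRigidGraph (d : ℕ) (G : SimpleGraph V) : Prop :=
  ∀ p : V → EuclideanSpace ℝ (Fin d), Generic p → RigidFramework G p

/-- A graph is globally `d`-rigid if every generic framework in `ℝ^d` is globally rigid. -/
def IsGloballyRigidGraph (d : ℕ) (G : SimpleGraph V) : Prop :=
  ∀ p : V → EuclideanSpace ℝ (Fin d), Generic p → GloballyRigidFramework G p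

/-- A graph is `d`-independent if the rows of the rigidity matrix `R(G, p)` are linearly
independent for every generic `p`; equivalently (linear dependencies among the rows of
the rigidity matrix are exactly the equilibrium stresses), no generic framework in `ℝ^d`
supports a nonzero equilibrium stress. -/
def IsIndepGraph [Fintype V] (d : ℕ) (G : SimpleGraph V) : Prop :=
  ∀ p : V → EuclideanSpace ℝ (Fin d), Generic p →
    ∀ ω : V → V → ℝ, IsEqStress G p ω → ω = 0

/-- A graph is a `d`-circuit if it is not `d`-independent but every proper subgraph is. -/
def IsCircuitGraph [Fintype V] (d : ℕ) (G : SimpleGraph V) : Prop :=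
  ¬ IsIndepGraph d G ∧ ∀ H : SimpleGraph V, H < G → IsIndepGraph d H

/-- Vertex connectivity at least `k`: more than `k` vertices, and removing any fewer
than `k` vertices leaves a connected graph. -/
def IsKConnected [Fintype V] (k : ℕ) (G : SimpleGraph V) : Prop :=
  k < Fintype.card V ∧ ∀ S : Set V, S.ncard < k → (G.induce Sᶜ).Connected

/-- `i(X)`: the number of edges of `G` with both endpoints in `X`. -/
noncomputable def edgesWithin (G : SimpleGraph V) (X : Set V) : ℕ :=
  {e ∈ G.edgeSet | ∀ v ∈ e, v ∈ X}.ncard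

/-- `d(X, Y)`: the number of edges of `G` with one endpoint in `X \ Y` and the other
in `Y \ X`. -/
noncomputable def crossEdges (G : SimpleGraph V) (X Y : Set V) : ℕ :=
  {e ∈ G.edgeSet | ∃ u ∈ X \ Y, ∃ v ∈ Y \ X, e = s(u, v)}.ncard

/-- `G` is `(3,6)`-sparse. -/
def Sparse36 (G : SimpleGraph V) : Prop :=
  ∀ X : Set V, 3 ≤ X.ncard → edgesWithin G X ≤ 3 * X.ncard - 6

/-- `X` is 3-critical in `G`. -/
def ThreeCritical (G : SimpleGraph V) (X : Set V) : Prop :=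
  3 ≤ X.ncard ∧ edgesWithin G X = 3 * X.ncard - 6

/-- `G'` (on vertex set `Option V`, with new vertex `none`) is a `d`-dimensional
1-extension of `G`: an edge `xy` of `G` is deleted and the new vertex is joined to
`x`, `y` and `d - 1` further vertices. -/
def IsOneExtension [DecidableEq V] (d : ℕ) (G : SimpleGraph V)
    (G' : SimpleGraph (Option V)) : Prop :=
  ∃ (x y : V) (D : Finset V), G.Adj x y ∧ x ∉ D ∧ y ∉ D ∧ D.card = d - 1 ∧
    (∀ u v : V, G'.Adj (some u) (some v) ↔
      (G.Adj u v ∧ ¬((u = x ∧ v = y) ∨ (u = y ∧ v = x)))) ∧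
    (∀ u : V, G'.Adj (some u) none ↔ (u = x ∨ u = y ∨ u ∈ D))

end Defs

/-! ### Derivations of the real numbers -/

/-- Formal smoothness stated for ring homomorphisms: `f` makes `B` an `R`-algebra, and `g` lifts along
the surjection `π` with nilpotent kernel. -/
theorem exists_ringHom_lift {R A B C : Type*} [CommRing R] [CommRing A] [CommRing B] [CommRing C]
    [Algebra R A] [Algebra.FormallySmooth R A] (f : R →+* B) (π : B →+* C)
    (hπ : Function.Surjective π) (hker : IsNilpotent (RingHom.ker π)) (g : A →+* C)
    (hg : ∀ r, g (algebraMap R A r) = π (f r)) :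
    ∃ h : A →+* B, (∀ a, π (h a) = g a) ∧ ∀ r, h (algebraMap R A r) = f r := by
  let _ := f.toAlgebra
  let _ := (π.comp f).toAlgebra
  let π' : B →ₐ[R] C := { π with commutes' := fun r => rfl }
  let g' : A →ₐ[R] C := { g with commutes' := fun r => hg r }
  let h := Algebra.FormallySmooth.liftOfSurjective g' π' hπ hker
  refine ⟨h.toRingHom, fun a => ?_, fun r => ?_⟩
  · exact Algebra.FormallySmooth.liftOfSurjective_apply g' π' hπ hker a
  · exact h.commutes r

open scoped IntermediateField.algebraAdjoinAdjoin in
/-- Derivations of `ℝ` take arbitrary prescribed values on an algebraically independent family: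
`ℝ` is formally smooth over the polynomial ring of a transcendence basis, so the substitution
`s ↦ s + δ s ε` extends to a ring homomorphism from `ℝ` to the dual numbers. -/
theorem exists_derivation {ι : Type*} {v : ι → ℝ} (hv : AlgebraicIndependent ℚ v) (δ : ι → ℝ) :
    ∃ D : Derivation ℤ ℝ ℝ, ∀ i, D (v i) = δ i := by
  classical
  obtain ⟨t, hst, hb⟩ := exists_isTranscendenceBasis_superset hv.coe_range
  have hw : AlgebraicIndependent ℚ ((↑) : t → ℝ) := hb.1
  let S := Algebra.adjoin ℚ (Set.range ((↑) : t → ℝ))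
  have hloc : Algebra.FormallySmooth S
      (IntermediateField.adjoin ℚ (Set.range ((↑) : t → ℝ))) :=
    .of_isLocalization (nonZeroDivisors _)
  have halg := hb.isAlgebraic_field
  have : Algebra.FormallyEtale (IntermediateField.adjoin ℚ (Set.range ((↑) : t → ℝ))) ℝ :=
    Algebra.FormallyEtale.of_isSeparable _ ℝ
  have hsm : Algebra.FormallySmooth S ℝ :=
    .comp _ (IntermediateField.adjoin ℚ (Set.range ((↑) : t → ℝ))) _
  let δ' : t → ℝ := fun s => if h : ∃ i, v i = s then δ h.choose else 0
  let F : MvPolynomial t ℚ →ₐ[ℚ] TrivSqZeroExt ℝ ℝ :=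
    MvPolynomial.aeval fun s => TrivSqZeroExt.inl (s : ℝ) + TrivSqZeroExt.inr (δ' s)
  let f : S →+* TrivSqZeroExt ℝ ℝ := (F.comp hw.aevalEquiv.symm.toAlgHom).toRingHom
  let π : TrivSqZeroExt ℝ ℝ →+* ℝ := (TrivSqZeroExt.fstHom ℝ ℝ ℝ).toRingHom
  have hF : ∀ P, (F P).fst = MvPolynomial.aeval ((↑) : t → ℝ) P := by
    intro P
    have : ((TrivSqZeroExt.fstHom ℝ ℝ ℝ).restrictScalars ℚ).comp F
        = MvPolynomial.aeval ((↑) : t → ℝ) := by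
      ext s
      simp [F]
    exact DFunLike.congr_fun this P
  obtain ⟨h, h1, h2⟩ := exists_ringHom_lift f π (fun a => ⟨TrivSqZeroExt.inl a, rfl⟩)
    ⟨2, TrivSqZeroExt.kerIdeal_sq ℝ ℝ⟩ (RingHom.id ℝ) (by
      intro r
      obtain ⟨P, rfl⟩ := hw.aevalEquiv.surjective r
      change _ = (F (hw.aevalEquiv.symm (hw.aevalEquiv P))).fst
      rw [AlgEquiv.symm_apply_apply, hF]
      exact hw.algebraMap_aevalEquiv P)
  have hfst : ∀ a, (h a).fst = a := h1
  refine ⟨Derivation.mk' ((TrivSqZeroExt.sndHom ℝ ℝ).toAddMonoidHom.comp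
    h.toAddMonoidHom).toIntLinearMap ?_, fun i => ?_⟩
  · intro a b
    change (h (a * b)).snd = a * (h b).snd + b * (h a).snd
    rw [map_mul, TrivSqZeroExt.snd_mul, hfst, hfst]
    simp
    ring
  · change (h (v i)).snd = δ i
    have hi : v i ∈ t := hst ⟨i, rfl⟩
    have e := h2 (hw.aevalEquiv (MvPolynomial.X ⟨v i, hi⟩))
    rw [hw.algebraMap_aevalEquiv, MvPolynomial.aeval_X] at e
    change h (v i) = F (hw.aevalEquiv.symm (hw.aevalEquiv _)) at e
    rw [AlgEquiv.symm_apply_apply, MvPolynomial.aeval_X] at e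
    have hex : ∃ j, v j = v i := ⟨i, rfl⟩
    have hj : hex.choose = i := hv.injective hex.choose_spec
    rw [e]
    simp only [TrivSqZeroExt.snd_add, TrivSqZeroExt.snd_inl, TrivSqZeroExt.snd_inr, zero_add, δ']
    rw [dif_pos hex, hj]

/-! ### Laplacians and stress matrices -/

section Laplacian

variable {V : Type*} [Fintype V]

/-- The weighted graph Laplacian of `ω`, as a linear operator; on weights with zero diagonal it is
the stress matrix. -/
def lap (ω : V → V → ℝ) : (V → ℝ) →ₗ[ℝ] (V → ℝ) where
  toFun y i := ∑ j, ω i j * (y i - y j)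
  map_add' y w := by
    ext i
    simp only [Pi.add_apply, ← Finset.sum_add_distrib]
    exact Finset.sum_congr rfl fun j _ => by ring
  map_smul' a y := by
    ext i
    simp only [Pi.smul_apply, smul_eq_mul, RingHom.id_apply, Finset.mul_sum]
    exact Finset.sum_congr rfl fun j _ => by ring

theorem lap_apply (ω : V → V → ℝ) (y : V → ℝ) (i : V) :
    lap ω y i = ∑ j, ω i j * (y i - y j) := rfl

theorem lap_add (ω θ : V → V → ℝ) (y : V → ℝ) : lap (ω + θ) y = lap ω y + lap θ y := by
  ext i
  simp only [lap_apply, Pi.add_apply, ← Finset.sum_add_distrib]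
  exact Finset.sum_congr rfl fun j _ => by ring

theorem lap_smul (a : ℝ) (ω : V → V → ℝ) (y : V → ℝ) : lap (a • ω) y = a • lap ω y := by
  ext i
  simp only [lap_apply, Pi.smul_apply, smul_eq_mul, Finset.mul_sum]
  exact Finset.sum_congr rfl fun j _ => by ring

theorem lap_sum {ι : Type*} (s : Finset ι) (ω : ι → V → V → ℝ) (y : V → ℝ) :
    lap (∑ a ∈ s, ω a) y = ∑ a ∈ s, lap (ω a) y := by
  classical
  induction s using Finset.induction_on with
  | empty => ext i; simp [lap_apply]
  | insert a s ha ih => rw [Finset.sum_insert ha, Finset.sum_insert ha, lap_add, ih]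

theorem lap_const (ω : V → V → ℝ) (a : ℝ) : lap ω (fun _ => a) = 0 := by
  ext i; simp [lap_apply]

/-- The bilinear form of the Laplacian of `ω`. -/
def form (ω : V → V → ℝ) (y w : V → ℝ) : ℝ := ∑ i, y i * lap ω w i

/-- The symmetrised expression of the form, in which only differences along edges enter. -/
theorem form_two {ω : V → V → ℝ} (h : ∀ i j, ω i j = ω j i) (y w : V → ℝ) :
    ∑ i, ∑ j, ω i j * ((y i - y j) * (w i - w j)) = 2 * form ω y w := by
  have h1 : form ω y w = ∑ i, ∑ j, ω i j * (y i * (w i - w j)) := by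
    simp only [form, lap_apply, Finset.mul_sum]
    exact Finset.sum_congr rfl fun i _ => Finset.sum_congr rfl fun j _ => by ring
  have h2 : form ω y w = ∑ i, ∑ j, ω i j * (y j * (w j - w i)) := by
    rw [h1, Finset.sum_comm]
    exact Finset.sum_congr rfl fun i _ => Finset.sum_congr rfl fun j _ => by rw [h j i]
  rw [two_mul]
  nth_rewrite 1 [h1]
  rw [h2, ← Finset.sum_add_distrib]
  refine Finset.sum_congr rfl fun i _ => ?_
  rw [← Finset.sum_add_distrib]
  exact Finset.sum_congr rfl fun j _ => by ring

theorem form_comm {ω : V → V → ℝ} (h : ∀ i j, ω i j = ω j i) (y w : V → ℝ) :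
    form ω y w = form ω w y := by
  have := form_two h y w
  have h2 := form_two h w y
  have : ∑ i, ∑ j, ω i j * ((y i - y j) * (w i - w j)) =
    ∑ i, ∑ j, ω i j * ((w i - w j) * (y i - y j)) := by simp only [mul_comm (y _ - y _)]
  linarith

theorem form_add_right (ω : V → V → ℝ) (y w w' : V → ℝ) :
    form ω y (w + w') = form ω y w + form ω y w' := by
  simp [form, mul_add, Finset.sum_add_distrib]

theorem form_smul_right (ω : V → V → ℝ) (a : ℝ) (y w : V → ℝ) :
    form ω y (a • w) = a * form ω y w := by
  simp only [form, map_smul, Pi.smul_apply, smul_eq_mul, Finset.mul_sum]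
  exact Finset.sum_congr rfl fun i _ => by ring

theorem form_add_left (ω : V → V → ℝ) (y y' w : V → ℝ) :
    form ω (y + y') w = form ω y w + form ω y' w := by
  simp [form, add_mul, Finset.sum_add_distrib]

theorem form_smul_left (ω : V → V → ℝ) (a : ℝ) (y w : V → ℝ) :
    form ω (a • y) w = a * form ω y w := by
  simp only [form, Pi.smul_apply, smul_eq_mul, Finset.mul_sum]
  exact Finset.sum_congr rfl fun i _ => by ring

theorem form_add (ω θ : V → V → ℝ) (y w : V → ℝ) :
    form (ω + θ) y w = form ω y w + form θ y w := by
  simp [form, lap_add, mul_add, Finset.sum_add_distrib]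

theorem form_smul (a : ℝ) (ω : V → V → ℝ) (y w : V → ℝ) :
    form (a • ω) y w = a * form ω y w := by
  simp only [form, lap_smul, Pi.smul_apply, smul_eq_mul, Finset.mul_sum]
  exact Finset.sum_congr rfl fun i _ => by ring

theorem form_sum {ι : Type*} (s : Finset ι) (ω : ι → V → V → ℝ) (y w : V → ℝ) :
    form (∑ a ∈ s, ω a) y w = ∑ a ∈ s, form (ω a) y w := by
  simp only [form, lap_sum, Finset.sum_apply, Finset.mul_sum]
  rw [Finset.sum_comm]

theorem form_of_lap_eq_zero {ω : V → V → ℝ} {w : V → ℝ} (h : lap ω w = 0) (y : V → ℝ) :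
    form ω y w = 0 := by simp [form, h]

theorem lap_eq_zero_of_form {ω : V → V → ℝ} {w : V → ℝ} (h : ∀ y, form ω y w = 0) :
    lap ω w = 0 := by
  classical
  ext i
  have := h (Pi.single i 1)
  simpa [form, Pi.single_apply] using this

/-- A null vector of a semidefinite form lies in the kernel. -/
theorem lap_eq_zero_of_null {ω : V → V → ℝ} (hs : ∀ i j, ω i j = ω j i)
    (hpos : ∀ y, 0 ≤ form ω y y) {k : V → ℝ} (hk : form ω k k = 0) : lap ω k = 0 := by
  refine lap_eq_zero_of_form fun y => ?_
  by_contra hne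
  have key : ∀ t : ℝ, 0 ≤ form ω y y + 2 * t * form ω y k := by
    intro t
    have := hpos (y + t • k)
    rw [form_add_right, form_add_left, form_add_left, form_smul_right, form_smul_right,
      form_smul_left, form_smul_left, hk, form_comm hs k y] at this
    linarith
  have h1 := key (-(form ω y y + 1) / (2 * form ω y k))
  have : 2 * (-(form ω y y + 1) / (2 * form ω y k)) * form ω y k = -(form ω y y + 1) := by
    field_simp
  linarith

/-- Equilibrium stresses, written coordinatewise: every coordinate function of the configuration
is killed by the Laplacian. -/
def Stress {d : ℕ} (G : SimpleGraph V) (p : V → Fin d → ℝ) (ω : V → V → ℝ) : Prop :=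
  (∀ i j, ω i j = ω j i) ∧ (∀ i j, ¬ G.Adj i j → ω i j = 0) ∧
    ∀ c, lap ω (fun v => p v c) = 0

theorem stress_iff {d : ℕ} (G : SimpleGraph V) (p : V → EuclideanSpace ℝ (Fin d))
    (ω : V → V → ℝ) : IsEqStress G p ω ↔ Stress G (fun v c => p v c) ω := by
  refine and_congr_right fun _ => and_congr_right fun _ => ?_
  constructor
  · intro h c
    ext i
    have := congrArg (fun z : EuclideanSpace ℝ (Fin d) => -(z c)) (h i)
    simp only [WithLp.ofLp_sum, Finset.sum_apply, PiLp.smul_apply, PiLp.sub_apply, smul_eq_mul,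
      PiLp.zero_apply, neg_zero, ← Finset.sum_neg_distrib] at this
    rw [lap_apply, Pi.zero_apply, ← this]
    exact Finset.sum_congr rfl fun j _ => by ring
  · intro h i
    ext c
    have := congrFun (h c) i
    rw [lap_apply, Pi.zero_apply] at this
    simp only [WithLp.ofLp_sum, Finset.sum_apply, PiLp.smul_apply, PiLp.sub_apply, smul_eq_mul,
      PiLp.zero_apply]
    rw [← neg_eq_zero, ← Finset.sum_neg_distrib, ← this]
    exact Finset.sum_congr rfl fun j _ => by ring

theorem stressMatrix_mulVec [DecidableEq V] {ω : V → V → ℝ} (h : ∀ i, ω i i = 0) (y : V → ℝ) :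
    (stressMatrix ω).mulVec y = lap ω y := by
  ext i
  have : ∀ j, stressMatrix ω i j * y j = (if i = j then (∑ k, ω i k) * y i else 0) - ω i j * y j := by
    intro j
    by_cases hij : i = j
    · subst hij; simp [stressMatrix, h]
    · simp [stressMatrix, hij]
  simp only [Matrix.mulVec, dotProduct, this, lap_apply, Finset.sum_sub_distrib, mul_sub]
  simp [Finset.sum_mul]

theorem stressMatrix_posSemidef_iff [DecidableEq V] {ω : V → V → ℝ} (h : ∀ i, ω i i = 0)
    (hs : ∀ i j, ω i j = ω j i) :
    (stressMatrix ω).PosSemidef ↔ ∀ y, 0 ≤ form ω y y := by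
  have hH : (stressMatrix ω).IsHermitian := by
    ext i j
    by_cases hij : i = j
    · subst hij; simp
    · simp [stressMatrix, hij, Ne.symm hij, hs i j]
  have e : ∀ y : V → ℝ, star y ⬝ᵥ (stressMatrix ω).mulVec y = form ω y y := by
    intro y
    rw [stressMatrix_mulVec h]; rfl
  rw [Matrix.posSemidef_iff_dotProduct_mulVec]
  simp only [e]
  exact ⟨fun h => h.2, fun h => ⟨hH, h⟩⟩

/-- Rank-nullity for the stress matrix, whose kernel is that of the Laplacian. -/
theorem stressMatrix_rank [DecidableEq V] {ω : V → V → ℝ} (h : ∀ i, ω i i = 0) :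
    (stressMatrix ω).rank + Module.finrank ℝ (LinearMap.ker (lap ω)) = Fintype.card V := by
  have e : (stressMatrix ω).mulVecLin = lap ω := by
    exact LinearMap.ext fun y => stressMatrix_mulVec h y
  have := LinearMap.finrank_range_add_finrank_ker (lap ω)
  rw [Module.finrank_fintype_fun_eq_card] at this
  rw [Matrix.rank, e, this]

end Laplacian

/-! ### Specialisation of generic configurations -/

section Genericity

variable {V : Type*} [Fintype V]

/-- A rational polynomial matrix with a nontrivial kernel at an algebraically independent point has
a nontrivial kernel at every real point: the Gram determinant vanishes identically. -/
theorem exists_kernel_of_algebraicIndependent {ι m n : Type*} [Fintype m] [Fintype n]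
    (M : m → n → MvPolynomial ι ℚ) {x : ι → ℝ} (hx : AlgebraicIndependent ℚ x) (y : ι → ℝ)
    (h : ∃ w : n → ℝ, w ≠ 0 ∧ ∀ r, ∑ e, MvPolynomial.aeval x (M r e) * w e = 0) :
    ∃ w : n → ℝ, w ≠ 0 ∧ ∀ r, ∑ e, MvPolynomial.aeval y (M r e) * w e = 0 := by
  classical
  let M' : Matrix m n (MvPolynomial ι ℚ) := M
  suffices ∃ w, w ≠ 0 ∧ (M'.map (MvPolynomial.aeval y)).mulVec w = 0 by
    obtain ⟨w, hw, h0⟩ := this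
    exact ⟨w, hw, fun r => congrFun h0 r⟩
  replace h : ∃ w, w ≠ 0 ∧ (M'.map (MvPolynomial.aeval x)).mulVec w = 0 := by
    obtain ⟨w, hw, h0⟩ := h
    exact ⟨w, hw, funext h0⟩
  have hdet : ∀ z : ι → ℝ, ((M'.map (MvPolynomial.aeval z)).transpose *
      M'.map (MvPolynomial.aeval z)).det = MvPolynomial.aeval z (M'.transpose * M').det := by
    intro z
    rw [AlgHom.map_det, AlgHom.mapMatrix_apply, Matrix.map_mul, Matrix.transpose_map]
  obtain ⟨w, hw, hMw⟩ := h
  have h0 : MvPolynomial.aeval x (M'.transpose * M').det = 0 := by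
    rw [← hdet, ← Matrix.exists_mulVec_eq_zero_iff]
    exact ⟨w, hw, by rw [← Matrix.mulVec_mulVec, hMw, Matrix.mulVec_zero]⟩
  have h1 : (M'.transpose * M').det = 0 := hx (by rw [h0, map_zero])
  have h2 := hdet y
  rw [h1, map_zero, ← Matrix.exists_mulVec_eq_zero_iff] at h2
  obtain ⟨w', hw', hz⟩ := h2
  refine ⟨w', hw', ?_⟩
  have h3 : w' ⬝ᵥ ((M'.map (MvPolynomial.aeval y)).transpose *
      M'.map (MvPolynomial.aeval y)).mulVec w' = 0 := by rw [hz, dotProduct_zero]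
  rw [← Matrix.mulVec_mulVec, Matrix.mulVec_transpose, dotProduct_comm,
    ← Matrix.dotProduct_mulVec] at h3
  exact dotProduct_self_eq_zero.mp h3

/-- Genericity of a configuration given by its coordinates. -/
def Gen {d : ℕ} {V : Type*} (p : V → Fin d → ℝ) : Prop :=
  AlgebraicIndependent ℚ (fun vi : V × Fin d => p vi.1 vi.2)

open Classical in
/-- A graph that is dependent at one generic configuration is dependent at every configuration. -/
theorem Gen.exists_stress {d : ℕ} {G : SimpleGraph V} {p : V → Fin d → ℝ} (hp : Gen p)
    (q : V → Fin d → ℝ) (h : ∃ ω, ω ≠ 0 ∧ Stress G p ω) : ∃ ω, ω ≠ 0 ∧ Stress G q ω := by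
  -- the rows express symmetry, support on the edges, and equilibrium, all with rational coefficients
  let M : (V × V) ⊕ (V × V) ⊕ (Fin d × V) → V × V → MvPolynomial (V × Fin d) ℚ :=
    fun r e => match r with
      | .inl ij => (if e = ij then 1 else 0) - (if e = ij.swap then 1 else 0)
      | .inr (.inl ij) => if G.Adj ij.1 ij.2 then 0 else if e = ij then 1 else 0
      | .inr (.inr (c, i)) => if e.1 = i then MvPolynomial.X (i, c) - MvPolynomial.X (e.2, c) else 0
  have key : ∀ (q : V → Fin d → ℝ) (w : V × V → ℝ),
      (∀ r, ∑ e, MvPolynomial.aeval (fun vi : V × Fin d => q vi.1 vi.2) (M r e) * w e = 0) ↔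
      Stress G q fun i j => w (i, j) := by
    intro q w
    have e1 : ∀ ij, ∑ e, MvPolynomial.aeval (fun vi : V × Fin d => q vi.1 vi.2) (M (.inl ij) e) * w e
        = w ij - w ij.swap := by
      intro ij
      simp only [M, map_sub, sub_mul,
        Finset.sum_sub_distrib, apply_ite (MvPolynomial.aeval _), map_one, map_zero, ite_mul, one_mul, zero_mul, Finset.sum_ite_eq', Finset.mem_univ, if_true]
    have e2 : ∀ ij, ∑ e, MvPolynomial.aeval (fun vi : V × Fin d => q vi.1 vi.2) (M (.inr (.inl ij)) e) * w e
        = if G.Adj ij.1 ij.2 then 0 else w ij := by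
      intro ij
      simp only [M,
        apply_ite (MvPolynomial.aeval _), map_one, map_zero, ite_mul]
      split_ifs <;> simp
    have e3 : ∀ c i, ∑ e, MvPolynomial.aeval (fun vi : V × Fin d => q vi.1 vi.2) (M (.inr (.inr (c, i))) e) * w e
        = lap (fun i j => w (i, j)) (fun v => q v c) i := by
      intro c i
      simp only [M, map_sub,
        apply_ite (MvPolynomial.aeval _), MvPolynomial.aeval_X, map_zero, ite_mul, lap_apply]
      rw [Fintype.sum_prod_type, Finset.sum_eq_single i]
      · simp [mul_comm]
      · intro b _ hb; simp [hb]
      · simp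
    constructor
    · intro h
      refine ⟨fun i j => ?_, fun i j hij => ?_, fun c => ?_⟩
      · have := e1 (i, j)
        rw [h (.inl (i, j))] at this
        exact sub_eq_zero.mp this.symm
      · have := e2 (i, j)
        rw [h (.inr (.inl (i, j)))] at this
        simpa [hij] using this.symm
      · ext i
        have := e3 c i
        rw [h (.inr (.inr (c, i)))] at this
        exact this.symm
    · rintro ⟨h1, h2, h3⟩
      intro r
      match r with
      | .inl ij => rw [e1]; exact sub_eq_zero.mpr (h1 _ _)
      | .inr (.inl ij) =>
        rw [e2]; split_ifs with h
        · rfl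
        · exact h2 _ _ h
      | .inr (.inr (c, i)) => rw [e3, h3]; rfl
  obtain ⟨ω, hne, hω⟩ := h
  obtain ⟨w, hw, h⟩ := exists_kernel_of_algebraicIndependent M hp
    (fun vi : V × Fin d => q vi.1 vi.2) ⟨fun e => ω e.1 e.2,
      fun h => hne (by ext i j; exact congrFun h (i, j)), (key _ _).mpr hω⟩
  refine ⟨fun i j => w (i, j), fun h => hw ?_, (key _ _).mp h⟩
  ext ⟨i, j⟩
  exact congrFun (congrFun h i) j

/-- Any `d + 1` vertices of a generic configuration are affinely independent. -/
theorem Gen.affine {d : ℕ} {V : Type*} {p : V → Fin d → ℝ} (hp : Gen p) {X : Finset V}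
    (hX : X.card ≤ d + 1) {w : V → ℝ} (h0 : ∑ v ∈ X, w v = 0)
    (h1 : ∀ c, ∑ v ∈ X, w v * p v c = 0) : ∀ v ∈ X, w v = 0 := by
  classical
  obtain ⟨f⟩ : Nonempty (X ↪ Option (Fin d)) := by
    rw [Function.Embedding.nonempty_iff_card_le]; simpa using hX
  let M : Option (Fin d) → X → MvPolynomial (V × Fin d) ℚ := fun r a =>
    match r with
    | none => 1
    | some c => MvPolynomial.X (a.1, c)
  by_contra! hne
  obtain ⟨v0, hv0, hw0⟩ := hne
  -- specialise the points of `X` to distinct vertices of the standard simplex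
  let q : V → Fin d → ℝ := fun v c => if h : v ∈ X then (if f ⟨v, h⟩ = some c then 1 else 0) else 0
  obtain ⟨u, hu, hM⟩ := exists_kernel_of_algebraicIndependent M hp
    (fun vi => q vi.1 vi.2) ⟨fun a => w a, fun h => hw0 (congrFun h ⟨v0, hv0⟩), by
      intro r
      match r with
      | none =>
        simp only [M, map_one, one_mul]
        rw [Finset.sum_coe_sort X w, h0]
      | some c =>
        simp only [M, MvPolynomial.aeval_X]
        rw [Finset.sum_coe_sort X (fun v => p v c * w v)]
        simpa only [mul_comm] using h1 c⟩
  have hs : ∀ a : X, ∀ c, f a = some c → u a = 0 := by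
    intro a c hac
    have := hM (some c)
    simp only [M, MvPolynomial.aeval_X, q] at this
    rw [Finset.sum_eq_single a] at this
    · simpa [hac] using this
    · intro b _ hb
      have : f b ≠ some c := fun h => hb (f.injective (h.trans hac.symm))
      simp [this]
    · simp
  refine hu (funext fun a => ?_)
  cases hfa : f a with
  | some c => exact hs a c hfa
  | none =>
    have := hM none
    simp only [M, map_one, one_mul] at this
    rw [Finset.sum_eq_single a] at this
    · exact this
    · intro b _ hb
      cases hfb : f b with
      | some c => exact hs b c hfb
      | none => exact absurd (f.injective (hfb.trans hfa.symm)) hb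
    · simp

end Genericity

/-! ### Generic placement of a new vertex -/

theorem mvPolynomial_rat_countable {ι : Type*} [Finite ι] : Countable (MvPolynomial ι ℚ) :=
  AddMonoidAlgebra.coeff_injective.countable (f := AddMonoidAlgebra.coeff (R := ℚ) (M := ι →₀ ℕ))

/-- A nonzero polynomial is nonzero somewhere in every nonempty open set. -/
theorem dense_setOf_eval_ne_zero {d : ℕ} {P : MvPolynomial (Fin d) ℝ} (hP : P ≠ 0) :
    Dense {z : Fin d → ℝ | MvPolynomial.eval z P ≠ 0} := by
  intro z
  rw [mem_closure_iff_nhds]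
  intro t ht
  obtain ⟨ε, hε, hball⟩ := Metric.mem_nhds_iff.mp ht
  by_contra hno
  refine hP (MvPolynomial.funext_set (fun i => Metric.ball (z i) ε) (fun i => ?_) ?_)
  · rw [Real.ball_eq_Ioo]
    exact Set.Ioo_infinite (by linarith)
  · intro y hy
    by_contra hne
    refine hno ⟨y, hball ?_, by simpa using hne⟩
    rw [← ball_pi _ hε] at *
    exact hy

/-- A generic configuration extends to a generic configuration with one further vertex placed in
any prescribed nonempty open set. -/
theorem Gen.extend {V : Type*} [Finite V] {d : ℕ} {p : V → Fin d → ℝ} (hp : Gen p)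
    {U : Set (Fin d → ℝ)} (hU : IsOpen U) (hne : U.Nonempty) :
    ∃ z ∈ U, Gen fun o : Option V => o.elim z p := by
  let x (z : Fin d → ℝ) : Option V × Fin d → ℝ := fun oc => (oc.1.elim z p : Fin d → ℝ) oc.2
  let R (P : MvPolynomial (Option V × Fin d) ℚ) : MvPolynomial (Fin d) ℝ :=
    MvPolynomial.aeval (fun oc : Option V × Fin d =>
      oc.1.elim (MvPolynomial.X oc.2) fun v => MvPolynomial.C (p v oc.2)) P
  have hR : ∀ z P, MvPolynomial.eval z (R P) = MvPolynomial.aeval (x z) P := by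
    intro z P
    have : ((MvPolynomial.aeval z : MvPolynomial (Fin d) ℝ →ₐ[ℝ] ℝ).restrictScalars ℚ).comp
        (MvPolynomial.aeval (fun oc : Option V × Fin d =>
          oc.1.elim (MvPolynomial.X oc.2) fun v => MvPolynomial.C (p v oc.2)))
        = MvPolynomial.aeval (x z) := by
      ext ⟨o, c⟩
      cases o <;> simp [x]
    have := DFunLike.congr_fun this P
    simpa [R, MvPolynomial.coe_aeval_eq_eval] using this
  have hR0 : ∀ P, P ≠ 0 → R P ≠ 0 := by
    intro P hP h0
    apply hP
    apply MvPolynomial.funext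
    intro r
    -- fixing the new vertex at a rational point leaves a rational relation among the old ones
    let T : MvPolynomial (Option V × Fin d) ℚ →ₐ[ℚ] MvPolynomial (V × Fin d) ℚ :=
      MvPolynomial.aeval fun oc => oc.1.elim (MvPolynomial.C (r (none, oc.2)))
        fun v => MvPolynomial.X (v, oc.2)
    have h1 : (MvPolynomial.aeval (fun vi : V × Fin d => p vi.1 vi.2)).comp T =
        MvPolynomial.aeval (x fun c => (r (none, c) : ℝ)) := by
      ext ⟨o, c⟩
      cases o <;> simp [x, T]
    have h2 : (MvPolynomial.aeval (fun vi : V × Fin d => r (some vi.1, vi.2))).comp T =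
        MvPolynomial.aeval r := by
      ext ⟨o, c⟩
      cases o <;> simp [T]
    have h3 : T P = 0 := by
      apply hp
      rw [map_zero]
      have := DFunLike.congr_fun h1 P
      rw [AlgHom.comp_apply] at this
      rw [this, ← hR, h0, map_zero]
    have := DFunLike.congr_fun h2 P
    rw [AlgHom.comp_apply, h3, map_zero] at this
    rw [map_zero, ← MvPolynomial.coe_aeval_eq_eval]
    exact this.symm
  have := mvPolynomial_rat_countable (ι := Option V × Fin d)
  have hd : Dense (⋂ P : {P : MvPolynomial (Option V × Fin d) ℚ // P ≠ 0},
      {z : Fin d → ℝ | MvPolynomial.eval z (R P) ≠ 0}) :=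
    dense_iInter_of_isOpen
      (fun P => isOpen_ne_fun (MvPolynomial.continuous_eval _) continuous_const)
      (fun P => dense_setOf_eval_ne_zero (hR0 P P.2))
  obtain ⟨z, hzU, hz⟩ := hd.inter_open_nonempty U hU hne
  refine ⟨z, hzU, algebraicIndependent_iff.mpr fun P hP => ?_⟩
  by_contra hP0
  have := Set.mem_iInter.mp hz ⟨P, hP0⟩
  exact this ((hR z P).trans hP)

/-! ### Stresses of the graph with one added edge -/

section Circuit

variable {V : Type*} [Fintype V]

theorem isIndepGraph_iff {d : ℕ} (G : SimpleGraph V) : IsIndepGraph d G ↔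
    ∀ p : V → Fin d → ℝ, Gen p → ∀ ω, Stress G p ω → ω = 0 := by
  constructor
  · intro h p hp ω hω
    exact h (fun v => WithLp.toLp 2 (p v)) hp ω ((stress_iff _ _ _).mpr hω)
  · intro h p hp ω hω
    exact h (fun v c => p v c) hp ω ((stress_iff _ _ _).mp hω)

/-- The weights on `Option V` that restrict to `ω` on `V` and to `l` on the pairs containing the
new vertex. -/
def optWeight (ω : V → V → ℝ) (l : V → ℝ) : Option V → Option V → ℝ
  | some i, some j => ω i j
  | some i, none => l i
  | none, some j => l j
  | none, none => 0

theorem lap_optWeight_some (ω : V → V → ℝ) (l : V → ℝ) (y : Option V → ℝ) (i : V) :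
    lap (optWeight ω l) y (some i) =
      lap ω (fun v => y (some v)) i + l i * (y (some i) - y none) := by
  rw [lap_apply, Fintype.sum_option, lap_apply, add_comm]; rfl

theorem lap_optWeight_none (ω : V → V → ℝ) (l : V → ℝ) (y : Option V → ℝ) :
    lap (optWeight ω l) y none = ∑ j, l j * (y none - y (some j)) := by
  rw [lap_apply, Fintype.sum_option]
  simp [optWeight]

/-- The weight that is `1` on the pair `a, b` and zero elsewhere. -/
def pairWeight [DecidableEq V] (a b : V) : V → V → ℝ :=
  fun i j => if (a = i ∧ b = j) ∨ (a = j ∧ b = i) then 1 else 0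

theorem lap_pairWeight [DecidableEq V] {a b : V} (hab : a ≠ b) (y : V → ℝ) (i : V) :
    lap (pairWeight a b) y i = (if i = a then y a - y b else 0) + if i = b then y b - y a else 0 := by
  have h : ∀ j, pairWeight a b i j * (y i - y j) =
      (if j = b then (if i = a then y a - y b else 0) else 0) +
      (if j = a then (if i = b then y b - y a else 0) else 0) := by
    intro j
    unfold pairWeight
    by_cases h1 : i = a <;> by_cases h2 : i = b <;> by_cases h3 : j = a <;> by_cases h4 : j = b <;>
      simp_all [eq_comm]
  rw [lap_apply, Finset.sum_congr rfl fun j _ => h j, Finset.sum_add_distrib]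
  simp

/-- `τ` is an equilibrium stress at `p` of the graph `H` with the edge `ab` added, normalised to
take the value `1` at `ab` if this is not an edge of `H`. -/
structure IsTau [DecidableEq V] {d : ℕ} (H : SimpleGraph V) (p : V → Fin d → ℝ) (a b : V)
    (τ : V → V → ℝ) : Prop where
  symm : ∀ i j, τ i j = τ j i
  diag : ∀ i, τ i i = 0
  off : ∀ i j, i ≠ j → ¬ H.Adj i j → τ i j = pairWeight a b i j
  eq : ∀ c, lap τ (fun v => p v c) = 0

theorem IsTau.swap [DecidableEq V] {d : ℕ} {H : SimpleGraph V} {p : V → Fin d → ℝ} {a b : V}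
    {τ : V → V → ℝ} (h : IsTau H p a b τ) : IsTau H p b a τ :=
  ⟨h.symm, h.diag, fun i j hij hH => by
    rw [h.off i j hij hH]; unfold pairWeight; congr 1; apply propext; tauto, h.eq⟩

theorem lap_sub' (ω θ : V → V → ℝ) (y : V → ℝ) : lap (ω - θ) y = lap ω y - lap θ y := by
  have := lap_add ω ((-1 : ℝ) • θ) y
  rw [lap_smul] at this
  simpa [sub_eq_add_neg] using this

theorem IsTau.unique [DecidableEq V] {d : ℕ} {H : SimpleGraph V} {p : V → Fin d → ℝ} {a b : V}
    {τ τ' : V → V → ℝ} (hH : ∀ ω, Stress H p ω → ω = 0) (h : IsTau H p a b τ)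
    (h' : IsTau H p a b τ') : τ = τ' := by
  refine sub_eq_zero.mp (hH _ ⟨fun i j => ?_, fun i j hij => ?_, fun c => ?_⟩)
  · simp [h.symm i j, h'.symm i j]
  · by_cases e : i = j
    · subst e; simp [h.diag, h'.diag]
    · simp [h.off i j e hij, h'.off i j e hij]
  · rw [lap_sub', h.eq, h'.eq, sub_zero]

variable {d : ℕ} {G' : SimpleGraph (Option V)} {X : Finset V}

/-- Deleting the new vertex of a circuit leaves an independent graph. -/
theorem comap_indep (hc : IsCircuitGraph d G') (hX : ∀ u, G'.Adj (some u) none ↔ u ∈ X)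
    (hne : X.Nonempty) {p : V → Fin d → ℝ} (hp : Gen p) (ω : V → V → ℝ)
    (hω : Stress (G'.comap some) p ω) : ω = 0 := by
  obtain ⟨z, -, hz⟩ := hp.extend isOpen_univ Set.univ_nonempty
  obtain ⟨u, hu⟩ := hne
  let H' : SimpleGraph (Option V) := (G'.comap some).map (Function.Embedding.some)
  have hle : H' ≤ G' := SimpleGraph.map_comap_le _ _
  have hlt : H' < G' := by
    refine lt_of_le_of_ne hle fun h => ?_
    have h1 := (hX u).mpr hu
    rw [← h] at h1
    obtain ⟨_, w, _, _, h2⟩ := h1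
    simp at h2
  have h0 := (isIndepGraph_iff _).mp (hc.2 H' hlt) _ hz (optWeight ω 0) ⟨?_, ?_, ?_⟩
  · ext i j
    exact congrFun (congrFun h0 (some i)) (some j)
  · rintro (_ | i) (_ | j) <;> simp [optWeight]
    exact hω.1 _ _
  · rintro (_ | i) (_ | j) h <;> simp [optWeight]
    exact hω.2.1 i j fun hh => h ((SimpleGraph.map_adj_apply).mpr hh)
  · intro c
    ext o
    cases o with
    | none => simp [lap_optWeight_none]
    | some i => rw [lap_optWeight_some]; simpa using congrFun (hω.2.2 c) i

/-- Placing the new vertex at the midpoint of `p a` and `p b` turns a stress of the one-extension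
into a stress of the smaller graph with `ab` added. -/
theorem exists_isTau [DecidableEq V] (hc : IsCircuitGraph d G')
    (hX : ∀ u, G'.Adj (some u) none ↔ u ∈ X)
    (hcard : X.card = d + 1) {p : V → Fin d → ℝ} (hp : Gen p) {a b : V} (ha : a ∈ X) (hb : b ∈ X)
    (hab : a ≠ b) : ∃ τ, IsTau (G'.comap some) p a b τ := by
  have hH := comap_indep hc hX ⟨a, ha⟩ hp
  have hdep : ∃ q : Option V → Fin d → ℝ, Gen q ∧ ∃ ω, ω ≠ 0 ∧ Stress G' q ω := by
    have := hc.1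
    rw [isIndepGraph_iff] at this
    push Not at this
    obtain ⟨q, hq, ω, h1, h2⟩ := this
    exact ⟨q, hq, ω, h2, h1⟩
  obtain ⟨q, hq, hst⟩ := hdep
  -- dependence of the circuit survives the specialisation of the new vertex to a midpoint
  let z : Fin d → ℝ := fun c => (p a c + p b c) / 2
  obtain ⟨θ, hne, hs, hsup, heq⟩ := hq.exists_stress (fun o : Option V => o.elim z p) hst
  let l : V → ℝ := fun v => θ (some v) none
  let η : V → V → ℝ := fun i j => θ (some i) (some j)
  have hθ : θ = optWeight η l := by
    ext (_ | i) (_ | j)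
    · exact hsup _ _ (G'.loopless.irrefl _)
    · exact hs _ _
    · rfl
    · rfl
  have hl0 : ∀ v, v ∉ X → l v = 0 := fun v hv => hsup _ _ (by rwa [hX])
  have hsumX : ∀ f : V → ℝ, ∑ v ∈ X, l v * f v = ∑ v, l v * f v := fun f =>
    Finset.sum_subset (Finset.subset_univ _) fun v _ hv => by rw [hl0 v hv, zero_mul]
  set s := ∑ v, l v with hs_def
  -- equilibrium at the new vertex makes `l` a multiple of the barycentric coordinates of the midpoint
  have hl : ∀ v, l v = s / 2 * ((if v = a then 1 else 0) + if v = b then 1 else 0) := by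
    intro v
    by_cases hv : v ∈ X
    · refine sub_eq_zero.mp (hp.affine hcard.le (w := fun v => l v -
        s / 2 * ((if v = a then 1 else 0) + if v = b then 1 else 0)) ?_ ?_ v hv)
      · have := hsumX fun _ => 1
        simp only [mul_one] at this
        rw [Finset.sum_sub_distrib, ← Finset.mul_sum, Finset.sum_add_distrib, this]
        simp only [Finset.sum_ite_eq', ha, hb, if_true, ← hs_def]
        ring
      · intro c
        have h1 := congrFun (heq c) none
        rw [hθ, lap_optWeight_none] at h1
        simp only [Option.elim, mul_sub, Finset.sum_sub_distrib, ← Finset.sum_mul, Pi.zero_apply,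
          ← hs_def] at h1
        simp only [sub_mul, mul_assoc, add_mul, mul_add, Finset.sum_sub_distrib,
          Finset.sum_add_distrib, ← Finset.mul_sum, hsumX, ite_mul, one_mul, zero_mul,
          Finset.sum_ite_eq', ha, hb, if_true]
        simp only [z] at h1
        linarith
    · rw [hl0 v hv, if_neg fun h : v = a => hv (h ▸ ha), if_neg fun h : v = b => hv (h ▸ hb)]
      simp
  have hη : ∀ c i, lap η (fun v => p v c) i = - (l i * (p i c - z c)) := by
    intro c i
    have h1 := congrFun (heq c) (some i)
    rw [hθ, lap_optWeight_some] at h1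
    simp only [Option.elim, Pi.zero_apply] at h1
    linarith
  -- otherwise `θ` would be a stress of the independent graph left by deleting the new vertex
  have hs0 : s ≠ 0 := by
    intro h0
    have hl' : l = 0 := by ext v; rw [hl v, h0]; simp
    apply hne
    rw [hθ]
    have : η = 0 := hH η ⟨fun i j => hs _ _, fun i j h => hsup _ _ h, fun c => by
      ext i; rw [hη, hl']; simp⟩
    rw [this, hl']
    ext (_ | i) (_ | j) <;> rfl
  -- the two halves of the path through the midpoint act as a single edge `ab` of weight `s / 4`
  refine ⟨(4 / s) • η + pairWeight a b, ?_, ?_, ?_, ?_⟩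
  · intro i j
    have : pairWeight a b i j = pairWeight a b j i := by
      unfold pairWeight; congr 1; apply propext; tauto
    simp [η, hs (some i) (some j), this]
  · intro i
    have h1 : η i i = 0 := hsup _ _ (G'.loopless.irrefl _)
    have h2 : pairWeight a b i i = 0 := by
      unfold pairWeight; rw [if_neg]; rintro (⟨rfl, h⟩ | ⟨rfl, h⟩) <;> exact hab h.symm
    simp [h1, h2]
  · intro i j _ h
    have h1 : η i j = 0 := hsup _ _ h
    simp [h1]
  · intro c
    ext i
    rw [lap_add, lap_smul, Pi.add_apply, lap_pairWeight hab, Pi.smul_apply, hη, hl, smul_eq_mul]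
    simp only [z, Pi.zero_apply]
    by_cases h1 : i = a
    · subst h1
      rw [if_neg hab, if_neg hab]
      simp
      field_simp
      ring
    · by_cases h2 : i = b
      · subst h2
        rw [if_neg h1, if_neg h1]
        simp
        field_simp
        ring
      · simp [h1, h2]

end Circuit

/-! ### Duality and differentiation of stresses -/

section Core

variable {V : Type*} [Fintype V] {d : ℕ}

/-- Finite-dimensional duality for the rigidity map: a prescription of first-order length changes
on the edges is realised by a velocity field as soon as every equilibrium stress annihilates it. -/
theorem exists_velocity (G : SimpleGraph V) (p : V → Fin d → ℝ) (g : V → V → ℝ)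
    (hg : ∀ i j, g i j = g j i) (h : ∀ θ, Stress G p θ → ∑ i, ∑ j, θ i j * g i j = 0) :
    ∃ m : V → Fin d → ℝ, ∀ i j, G.Adj i j →
      ∑ c, (p i c - p j c) * (m i c - m j c) = g i j := by
  classical
  let T : (V → Fin d → ℝ) →ₗ[ℝ] (V × V → ℝ) :=
    { toFun := fun m ij => if G.Adj ij.1 ij.2 then
        ∑ c, (p ij.1 c - p ij.2 c) * (m ij.1 c - m ij.2 c) else 0
      map_add' := by
        intro m m'
        ext ij
        by_cases hij : G.Adj ij.1 ij.2
        · simp only [hij, if_true, Pi.add_apply, ← Finset.sum_add_distrib]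
          exact Finset.sum_congr rfl fun c _ => by ring
        · simp [hij]
      map_smul' := by
        intro a m
        ext ij
        by_cases hij : G.Adj ij.1 ij.2
        · simp only [hij, if_true, Pi.smul_apply, smul_eq_mul, RingHom.id_apply, Finset.mul_sum]
          exact Finset.sum_congr rfl fun c _ => by ring
        · simp [hij] }
  let g' : V × V → ℝ := fun ij => if G.Adj ij.1 ij.2 then g ij.1 ij.2 else 0
  by_cases hmem : g' ∈ LinearMap.range T
  · obtain ⟨m, hm⟩ := hmem
    refine ⟨m, fun i j hij => ?_⟩
    have := congrFun hm (i, j)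
    simpa [T, g', hij] using this
  exfalso
  -- a functional separating `g'` from the range is a stress that does not annihilate `g`
  obtain ⟨f, hfg, hf⟩ := Submodule.exists_le_ker_of_notMem hmem
  let φ : V → V → ℝ := fun i j => f (Pi.single (i, j) 1)
  have hφ : ∀ u : V × V → ℝ, f u = ∑ i, ∑ j, φ i j * u (i, j) := by
    intro u
    rw [LinearMap.pi_apply_eq_sum_univ f u, Fintype.sum_prod_type]
    refine Finset.sum_congr rfl fun i _ => Finset.sum_congr rfl fun j _ => ?_
    rw [smul_eq_mul, mul_comm]
    congr 2
    ext e
    simp [Pi.single_apply, eq_comm]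
  let θ : V → V → ℝ := fun i j => if G.Adj i j then φ i j + φ j i else 0
  have hcontr : ∀ u : V → V → ℝ, (∀ i j, u i j = u j i) →
      ∑ i, ∑ j, θ i j * u i j =
        2 * f (fun ij => if G.Adj ij.1 ij.2 then u ij.1 ij.2 else 0) := by
    intro u hu
    have h1 : ∑ i, ∑ j, θ i j * u i j =
        (∑ i, ∑ j, φ i j * (if G.Adj i j then u i j else 0)) +
        ∑ i, ∑ j, φ j i * (if G.Adj j i then u j i else 0) := by
      rw [← Finset.sum_add_distrib]
      refine Finset.sum_congr rfl fun i _ => ?_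
      rw [← Finset.sum_add_distrib]
      refine Finset.sum_congr rfl fun j _ => ?_
      by_cases hij : G.Adj i j
      · simp only [θ, hij, hij.symm, if_true, hu j i]; ring
      · have hij' : ¬ G.Adj j i := fun hh => hij hh.symm
        simp [θ, hij, hij']
    rw [h1, hφ, two_mul]
    congr 1
    exact Finset.sum_comm
  have hθs : ∀ i j, θ i j = θ j i := fun i j => by simp only [θ, G.adj_comm i j, add_comm]
  have hstress : Stress G p θ := by
    refine ⟨hθs, fun i j hij => if_neg hij, fun c => ?_⟩
    refine lap_eq_zero_of_form fun y => ?_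
    rw [form_comm hθs]
    have h1 := form_two hθs (fun v => p v c) y
    rw [hcontr _ fun i j => by ring] at h1
    have h2 : T (fun v c' => if c' = c then y v else 0) =
        fun ij => if G.Adj ij.1 ij.2 then (p ij.1 c - p ij.2 c) * (y ij.1 - y ij.2) else 0 := by
      ext ij
      simp only [T, LinearMap.coe_mk, AddHom.coe_mk]
      congr 1
      rw [Finset.sum_eq_single c]
      · simp
      · intro b _ hb; simp [hb]
      · simp
    have h3 : f (T (fun v c' => if c' = c then y v else 0)) = 0 := hf ⟨_, rfl⟩
    rw [h2] at h3
    rw [h3] at h1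
    linarith
  have h1 := h θ hstress
  rw [hcontr g hg] at h1
  exact hfg (by linarith)

/-- The stresses of `H + ab` form a line, because `H` is independent. -/
theorem IsTau.span [DecidableEq V] {H : SimpleGraph V} {p : V → Fin d → ℝ} {a b : V}
    {τ θ : V → V → ℝ} (hH : ∀ ω, Stress H p ω → ω = 0) (hτ : IsTau H p a b τ)
    (hab : a ≠ b) (hnab : ¬ H.Adj a b)
    (hθ : Stress (H ⊔ SimpleGraph.edge a b) p θ) : θ = θ a b • τ := by
  refine sub_eq_zero.mp (hH _ ⟨fun i j => ?_, fun i j hij => ?_, fun c => ?_⟩)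
  · simp [hτ.symm i j, hθ.1 i j]
  · by_cases e : i = j
    · subst e; simp [hτ.diag, hθ.2.1 i i (SimpleGraph.irrefl _)]
    · simp only [Pi.sub_apply, Pi.smul_apply, smul_eq_mul, hτ.off i j e hij, pairWeight]
      split_ifs with h
      · obtain ⟨rfl, rfl⟩ | ⟨rfl, rfl⟩ := h
        · ring
        · rw [hθ.1 b a]; ring
      · rw [hθ.2.1 i j]
        · ring
        · rw [SimpleGraph.sup_adj, SimpleGraph.edge_adj]; tauto
  · rw [lap_sub', lap_smul, hτ.eq, hθ.2.2]; simp

/-- Differentiating the equilibrium equation. -/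
theorem lap_derivation (D : Derivation ℤ ℝ ℝ) {ω : V → V → ℝ} {y : V → ℝ} (h : lap ω y = 0) :
    lap (fun i j => D (ω i j)) y = - lap ω (fun v => D (y v)) := by
  ext i
  have h1 := congrArg D (congrFun h i)
  rw [lap_apply, map_sum, Pi.zero_apply, map_zero] at h1
  simp only [Derivation.leibniz, map_sub, smul_eq_mul, Finset.sum_add_distrib] at h1
  rw [Pi.neg_apply, lap_apply, lap_apply]
  have : ∑ j, D (ω i j) * (y i - y j) = ∑ j, (y i - y j) * D (ω i j) :=
    Finset.sum_congr rfl fun j _ => mul_comm _ _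
  linarith

end Core

/-! ### Isotropic kernel vectors -/

section Dichotomy

variable {V : Type*} [Fintype V] {d : ℕ}

theorem IsTau.stress [DecidableEq V] {H : SimpleGraph V} {p : V → Fin d → ℝ} {a b : V}
    {τ : V → V → ℝ} (hτ : IsTau H p a b τ) (hab : a ≠ b) :
    Stress (H ⊔ SimpleGraph.edge a b) p τ := by
  refine ⟨hτ.symm, fun i j h => ?_, hτ.eq⟩
  by_cases e : i = j
  · rw [e, hτ.diag]
  · rw [SimpleGraph.sup_adj, SimpleGraph.edge_adj, not_or] at h
    rw [hτ.off i j e h.1, pairWeight, if_neg]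
    intro h3
    exact h.2 ⟨h3.imp (fun h => ⟨h.1.symm, h.2.symm⟩) fun h => ⟨h.2.symm, h.1.symm⟩, e⟩

theorem sum_congr_of_support {E : SimpleGraph V} {θ : V → V → ℝ} (h : ∀ i j, ¬ E.Adj i j → θ i j = 0)
    {f g : V → V → ℝ} (hfg : ∀ i j, E.Adj i j → f i j = g i j) :
    ∑ i, ∑ j, θ i j * f i j = ∑ i, ∑ j, θ i j * g i j := by
  refine Finset.sum_congr rfl fun i _ => Finset.sum_congr rfl fun j _ => ?_
  by_cases hij : E.Adj i j
  · rw [hfg i j hij]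
  · rw [h i j hij]; simp

theorem sum_form {ι : Type*} [Fintype ι] {θ : V → V → ℝ} (hs : ∀ i j, θ i j = θ j i)
    (s : ι → ℝ) (y w : ι → V → ℝ) :
    ∑ i, ∑ j, θ i j * ∑ c, s c * ((y c i - y c j) * (w c i - w c j)) =
      2 * ∑ c, s c * form θ (y c) (w c) := by
  have h : ∀ c, 2 * (s c * form θ (y c) (w c)) =
      ∑ i, ∑ j, s c * (θ i j * ((y c i - y c j) * (w c i - w c j))) := by
    intro c
    rw [mul_left_comm, ← form_two hs]
    simp only [Finset.mul_sum]
  symm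
  rw [Finset.mul_sum, Finset.sum_congr rfl (fun c _ => h c), Finset.sum_comm]
  refine Finset.sum_congr rfl fun i _ => ?_
  rw [Finset.sum_comm]
  refine Finset.sum_congr rfl fun j _ => ?_
  rw [Finset.mul_sum]
  exact Finset.sum_congr rfl fun c _ => by ring

/-- If a kernel vector `k` of `ω` is isotropic for `τ`, its squared differences along the edges of
`H + ab` are the first-order length changes under a velocity field, and the coordinates of this field
again lie in the kernel of `ω`. -/
theorem exists_kernel_velocity [DecidableEq V] {H : SimpleGraph V} {p : V → Fin d → ℝ} {x y a b : V}
    {ω τ : V → V → ℝ} (hp : Gen p) (hH : ∀ ω, Stress H p ω → ω = 0)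
    (hω : IsTau H p x y ω) (hτ : IsTau H p a b τ) (hab : a ≠ b) (hnab : ¬ H.Adj a b)
    {k : V → ℝ} (hk : lap ω k = 0) (hq : form τ k k = 0) :
    ∃ m : V → Fin d → ℝ, (∀ c, lap ω (fun v => m v c) = 0) ∧
      ∀ i j, (H ⊔ SimpleGraph.edge a b).Adj i j →
        ∑ c, (p i c - p j c) * (m i c - m j c) = (k i - k j) * (k i - k j) := by
  obtain ⟨m, hm⟩ := exists_velocity (H ⊔ SimpleGraph.edge a b) p
    (fun i j => (k i - k j) * (k i - k j)) (fun i j => by ring) (fun θ hθ => by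
      rw [form_two hθ.1, IsTau.span hH hτ hab hnab hθ, form_smul, hq]; ring)
  refine ⟨m, fun c => ?_, hm⟩
  ext v
  -- the indicator derivation singles out the entry at `v` of the Laplacian of `m c`
  obtain ⟨D, hD⟩ := exists_derivation hp (fun vc => if vc = (v, c) then 1 else 0)
  set W : V → V → ℝ := fun i j => D (ω i j) with hW
  have hWs : ∀ i j, W i j = W j i := fun i j => by simp only [hW, hω.symm i j]
  -- `W` is supported on `H` alone, since the weight of `ω` at `xy` is constant
  have hWH : ∀ i j, ¬ H.Adj i j → W i j = 0 := by
    intro i j hij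
    by_cases e : i = j
    · simp [hW, e, hω.diag]
    · simp only [hW, hω.off i j e hij, pairWeight]
      split_ifs
      · exact D.map_one_eq_zero
      · exact map_zero D
  have h1 : form W k k = 0 := by
    rw [form, hW, lap_derivation D hk]
    have := form_comm hω.symm k (fun v => D (k v))
    rw [form_of_lap_eq_zero hk, form] at this
    simp [this]
  have h2 := form_two hWs k k
  rw [h1, mul_zero, sum_congr_of_support hWH (f := fun i j => (k i - k j) * (k i - k j))
    (g := fun i j => ∑ c, 1 * ((m i c - m j c) * (p i c - p j c)))
    (fun i j hij => by
      rw [← hm i j (Or.inl hij)]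
      exact Finset.sum_congr rfl fun c _ => by ring),
    sum_form hWs (fun _ => 1) (fun c v => m v c) (fun c v => p v c)] at h2
  have h3 : ∀ c', form W (fun v => m v c') (fun v => p v c') =
      - if c' = c then lap ω (fun v => m v c) v else 0 := by
    intro c'
    have h4 : (fun u => D (p u c')) = fun u => if c' = c then (Pi.single v 1 : V → ℝ) u else 0 := by
      ext u
      rw [hD (u, c'), Pi.single_apply]
      simp only [Prod.mk.injEq]
      by_cases h5 : c' = c <;> by_cases h6 : u = v <;> simp [h5, h6]
    have h5 : form W (fun v => m v c') (fun v => p v c') =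
        - form ω (fun v => m v c') (fun u => D (p u c')) := by
      rw [form, hW, lap_derivation D (hω.eq c'), form]
      simp
    rw [h5, h4, form_comm hω.symm]
    by_cases h6 : c' = c
    · subst h6
      simp [form, Pi.single_apply]
    · simp [h6, form]
  simp only [h3] at h2
  simpa using h2

/-- If the squared differences of `k` along the edges of `H + ab` are values of a quadratic form `S` on
the edge vectors, then `k` lies in the kernel of `τ`. For `S = 0` the vector `k` is constant along
edges. Otherwise `p` is projected along a non-isotropic direction `e` and a multiple of `e` is added
so as to make one coordinate equal to `k`; a stress `Θ` at this specialised configuration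
turns out to be a stress at `p` as well, hence a multiple of `τ`. -/
theorem IsTau.eq_of_quadric [DecidableEq V] {H : SimpleGraph V} {p : V → Fin d → ℝ} {a b : V}
    {τ : V → V → ℝ} (hp : Gen p) (hH : ∀ ω, Stress H p ω → ω = 0)
    (hτ : IsTau H p a b τ) (hab : a ≠ b) (hnab : ¬ H.Adj a b) {k : V → ℝ}
    (S : Fin d → Fin d → ℝ) (hS : ∀ c r, S c r = S r c)
    (hk : ∀ i j, (H ⊔ SimpleGraph.edge a b).Adj i j → (k i - k j) * (k i - k j) =
      ∑ c, ∑ r, S c r * ((p i c - p j c) * (p i r - p j r))) : lap τ k = 0 := by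
  by_cases hS0 : ∀ e : Fin d → ℝ, ∑ c, ∑ r, S c r * (e c * e r) = 0
  · ext i
    rw [lap_apply]
    refine Finset.sum_eq_zero fun j _ => ?_
    by_cases hij : (H ⊔ SimpleGraph.edge a b).Adj i j
    · have := hk i j hij
      rw [hS0 fun c => p i c - p j c] at this
      rw [mul_self_eq_zero.mp this, mul_zero]
    · rw [(hτ.stress hab).2.1 i j hij, zero_mul]
  push Not at hS0
  obtain ⟨e', he'⟩ := hS0
  obtain ⟨c₀, hc₀⟩ : ∃ c, e' c ≠ 0 := by
    by_contra! h
    exact he' (by simp [h])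
  obtain ⟨e, he0, he⟩ : ∃ e : Fin d → ℝ, e c₀ = 1 ∧ ∑ c, ∑ r, S c r * (e c * e r) ≠ 0 := by
    refine ⟨fun c => e' c / e' c₀, div_self hc₀, ?_⟩
    have : ∑ c, ∑ r, S c r * (e' c / e' c₀ * (e' r / e' c₀)) =
        (∑ c, ∑ r, S c r * (e' c * e' r)) / (e' c₀ * e' c₀) := by
      simp only [Finset.sum_div]
      refine Finset.sum_congr rfl fun i _ => Finset.sum_congr rfl fun j _ => ?_
      field_simp
    rw [this]
    exact div_ne_zero he' (mul_ne_zero hc₀ hc₀)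
  have hτ1 : τ a b = 1 := by rw [hτ.off a b hab hnab, pairWeight, if_pos (Or.inl ⟨rfl, rfl⟩)]
  obtain ⟨Θ, hΘ0, hΘs, hΘE, hΘeq⟩ := hp.exists_stress
    (fun i c => p i c + (k i - p i c₀) * e c)
    ⟨τ, fun h => by rw [h] at hτ1; simp at hτ1, hτ.stress hab⟩
  have hΘk : lap Θ k = 0 := by
    have := hΘeq c₀
    simpa [he0] using this
  set u := lap Θ (fun v => p v c₀) with hu
  have hΘp : ∀ c, lap Θ (fun v => p v c) = e c • u := by
    intro c
    have h1 : (fun v => p v c + (k v - p v c₀) * e c) =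
        (fun v => p v c) + e c • (k - fun v => p v c₀) := by
      ext v; simp [mul_comm]
    have h2 := hΘeq c
    rw [h1, map_add, map_smul, map_sub, hΘk, ← hu] at h2
    rw [zero_sub, smul_neg] at h2
    exact add_neg_eq_zero.mp h2
  obtain ⟨z, hZ⟩ : ∃ z, ∀ c r, form Θ (fun v => p v c) (fun v => p v r) = e c * e r * z := by
    have h1 : ∀ c r, form Θ (fun v => p v c) (fun v => p v r) =
        e r * form Θ (fun v => p v c) (fun v => p v c₀) := by
      intro c r
      rw [form, form, hΘp, ← hu, Finset.mul_sum]
      exact Finset.sum_congr rfl fun i _ => by simp only [Pi.smul_apply, smul_eq_mul]; ring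
    refine ⟨form Θ (fun v => p v c₀) (fun v => p v c₀), fun c r => ?_⟩
    rw [h1, form_comm hΘs, h1]; ring
  -- contract the quadric relation with `Θ`
  have hz : z = 0 := by
    have h1 := form_two hΘs k k
    rw [form_of_lap_eq_zero hΘk, sum_congr_of_support hΘE hk] at h1
    have h2 := sum_form hΘs (fun cr : Fin d × Fin d => S cr.1 cr.2)
      (fun cr v => p v cr.1) (fun cr v => p v cr.2)
    simp only [Fintype.sum_prod_type, hZ] at h2
    rw [h1] at h2
    have h3 : ∑ c, ∑ r, S c r * (e c * e r * z) = (∑ c, ∑ r, S c r * (e c * e r)) * z := by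
      simp only [Finset.sum_mul, mul_assoc]
    rw [h3] at h2
    have h4 : (∑ c, ∑ r, S c r * (e c * e r)) * z = 0 := by linarith
    exact (mul_eq_zero.mp h4).resolve_left he
  simp only [hz, mul_zero] at hZ
  obtain ⟨r₀, hr₀⟩ : ∃ r, ∑ c, S c r * e c ≠ 0 := by
    by_contra! h
    apply he
    rw [Finset.sum_comm]
    refine Finset.sum_eq_zero fun r _ => ?_
    have : ∑ c, S c r * (e c * e r) = (∑ c, S c r * e c) * e r := by
      rw [Finset.sum_mul]; exact Finset.sum_congr rfl fun c _ => by ring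
    rw [this, h, zero_mul]
  -- differentiate the quadric relation before contracting it with `Θ`; as `z = 0`, the unknown
  -- derivatives of `S` and of `k` drop out
  have hu0 : u = 0 := by
    ext v
    obtain ⟨D, hD⟩ := exists_derivation hp (fun vc => if vc = (v, r₀) then 1 else 0)
    have hDk : ∀ i j, (H ⊔ SimpleGraph.edge a b).Adj i j →
        2 * ((D (k i) - D (k j)) * (k i - k j)) =
        (∑ cr : Fin d × Fin d, D (S cr.1 cr.2) * ((p i cr.1 - p j cr.1) * (p i cr.2 - p j cr.2))) +
        2 * ∑ cr : Fin d × Fin d, S cr.1 cr.2 *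
          ((D (p i cr.2) - D (p j cr.2)) * (p i cr.1 - p j cr.1)) := by
      intro i j hij
      have h1 := congrArg D (hk i j hij)
      simp only [map_sum, Derivation.leibniz, map_sub, smul_eq_mul] at h1
      have h2 : ∑ c, ∑ r, S c r * ((D (p i c) - D (p j c)) * (p i r - p j r)) =
          ∑ c, ∑ r, S c r * ((D (p i r) - D (p j r)) * (p i c - p j c)) := by
        rw [Finset.sum_comm]
        exact Finset.sum_congr rfl fun c _ => Finset.sum_congr rfl fun r _ => by rw [hS]
      rw [Fintype.sum_prod_type, Fintype.sum_prod_type, two_mul (∑ c, _)]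
      nth_rewrite 1 [← h2]
      simp only [← Finset.sum_add_distrib]
      have h3 : 2 * ((D (k i) - D (k j)) * (k i - k j)) =
        (k i - k j) * (D (k i) - D (k j)) + (k i - k j) * (D (k i) - D (k j)) := by ring
      rw [h3, h1]
      exact Finset.sum_congr rfl fun c _ => Finset.sum_congr rfl fun r _ => by ring
    have h1 := sum_congr_of_support hΘE hDk
    simp only [mul_add, Finset.sum_add_distrib, mul_left_comm _ (2 : ℝ), ← Finset.mul_sum] at h1
    have hDS := sum_form hΘs (fun cr : Fin d × Fin d => D (S cr.1 cr.2))
      (fun cr v => p v cr.1) (fun cr v => p v cr.2)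
    have hDp := sum_form hΘs (fun cr : Fin d × Fin d => S cr.1 cr.2)
      (fun cr v => D (p v cr.2)) (fun cr v => p v cr.1)
    rw [form_two hΘs (fun v => D (k v)) k, form_of_lap_eq_zero hΘk, hDS, hDp] at h1
    simp only [hZ, mul_zero, Finset.sum_const_zero, zero_add] at h1
    have h4 : ∀ c r, form Θ (fun v => D (p v r)) (fun v => p v c) =
        if r = r₀ then e c * u v else 0 := by
      intro c r
      rw [form, hΘp, Finset.sum_eq_single v]
      · rw [hD (v, r)]
        by_cases h5 : r = r₀ <;> simp [h5]
      · intro w _ hw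
        rw [hD (w, r)]; simp [hw]
      · simp
    simp only [h4, Fintype.sum_prod_type, mul_ite, mul_zero, Finset.sum_ite_eq',
      Finset.mem_univ, if_true] at h1
    simp only [← mul_assoc, ← Finset.sum_mul] at h1
    have h6 : (∑ c, S c r₀ * e c) * u v = 0 := by linarith
    exact (mul_eq_zero.mp h6).resolve_left hr₀
  have hΘτ := IsTau.span hH hτ hab hnab ⟨hΘs, hΘE, fun c => by rw [hΘp, hu0, smul_zero]⟩
  have hne : Θ a b ≠ 0 := fun h => hΘ0 (by rw [hΘτ, h, zero_smul])
  rw [hΘτ, lap_smul] at hΘk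
  exact (smul_eq_zero.mp hΘk).resolve_left hne

/-- If the kernel of `ω` exceeds the affine functions only by `k`, then `k` is either
non-isotropic for `τ` or in its kernel. -/
theorem IsTau.lap_eq_zero_of_form [DecidableEq V] {H : SimpleGraph V} {p : V → Fin d → ℝ}
    {x y a b : V} {ω τ : V → V → ℝ} (hp : Gen p) (hH : ∀ ω, Stress H p ω → ω = 0)
    (hω : IsTau H p x y ω) (hτ : IsTau H p a b τ) (hab : a ≠ b)
    {k : V → ℝ} (hk : lap ω k = 0)
    (hker : ∀ m, lap ω m = 0 → ∃ (α : ℝ) (r : Fin d → ℝ) (β : ℝ),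
      ∀ i, m i = α + ∑ c, r c * p i c + β * k i)
    (hq : form τ k k = 0) : lap τ k = 0 := by
  by_cases hnab : H.Adj a b
  · have : τ = 0 := by
      refine hH τ ⟨hτ.symm, fun i j hij => ?_, hτ.eq⟩
      by_cases e : i = j
      · rw [e, hτ.diag]
      · rw [hτ.off i j e hij, pairWeight, if_neg]
        rintro (⟨rfl, rfl⟩ | ⟨rfl, rfl⟩)
        · exact hij hnab
        · exact hij hnab.symm
    rw [this]; ext i; simp [lap_apply]
  obtain ⟨m, hm, hmk⟩ := exists_kernel_velocity hp hH hω hτ hab hnab hk hq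
  choose α L β hL using fun c => hker _ (hm c)
  -- completing the square removes the terms linear in `k` and turns the relation into a quadric
  let k' : V → ℝ := k - ∑ c, (β c / 2) • fun v => p v c
  have hk' : lap τ k' = lap τ k := by
    simp only [k', map_sub, map_sum, map_smul, hτ.eq, smul_zero, Finset.sum_const_zero, sub_zero]
  rw [← hk']
  refine hτ.eq_of_quadric hp hH hab hnab (fun c r => (L c r + L r c) / 2 + β c * β r / 4)
    (fun c r => by ring) fun i j hij => ?_
  have h1 := hmk i j hij
  simp only [hL] at h1
  have h2 : k' i - k' j = (k i - k j) - ∑ c, β c * (p i c - p j c) / 2 := by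
    simp only [k', Pi.sub_apply, Finset.sum_apply, Pi.smul_apply, smul_eq_mul, mul_sub, sub_div,
      Finset.sum_sub_distrib, div_mul_eq_mul_div]
    ring
  have h3 : ∑ c, (p i c - p j c) * (α c + ∑ r, L c r * p i r + β c * k i -
      (α c + ∑ r, L c r * p j r + β c * k j)) =
      (∑ c, ∑ r, L c r * ((p i c - p j c) * (p i r - p j r))) +
        2 * (∑ c, β c * (p i c - p j c) / 2) * (k i - k j) := by
    rw [mul_assoc, Finset.sum_mul, Finset.mul_sum, ← Finset.sum_add_distrib]
    refine Finset.sum_congr rfl fun c _ => ?_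
    have : ∑ r, L c r * ((p i c - p j c) * (p i r - p j r)) =
        (p i c - p j c) * (∑ r, L c r * p i r - ∑ r, L c r * p j r) := by
      rw [← Finset.sum_sub_distrib, Finset.mul_sum]
      exact Finset.sum_congr rfl fun r _ => by ring
    rw [this]; ring
  rw [h3] at h1
  have h4 : ∑ c, ∑ r, L r c * ((p i c - p j c) * (p i r - p j r)) =
      ∑ c, ∑ r, L c r * ((p i c - p j c) * (p i r - p j r)) := by
    rw [Finset.sum_comm]
    exact Finset.sum_congr rfl fun c _ => Finset.sum_congr rfl fun r _ => by ring
  have h5 : (∑ c, β c * (p i c - p j c) / 2) * (∑ c, β c * (p i c - p j c) / 2) =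
      ∑ c, ∑ r, β c * β r / 4 * ((p i c - p j c) * (p i r - p j r)) := by
    rw [Finset.sum_mul_sum]
    exact Finset.sum_congr rfl fun c _ => Finset.sum_congr rfl fun r _ => by ring
  have h6 : ∑ c, ∑ r, ((L c r + L r c) / 2 + β c * β r / 4) * ((p i c - p j c) * (p i r - p j r)) =
      (∑ c, ∑ r, L c r * ((p i c - p j c) * (p i r - p j r)) +
        ∑ c, ∑ r, L r c * ((p i c - p j c) * (p i r - p j r))) / 2 +
      ∑ c, ∑ r, β c * β r / 4 * ((p i c - p j c) * (p i r - p j r)) := by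
    simp only [← Finset.sum_add_distrib, Finset.sum_div]
    exact Finset.sum_congr rfl fun c _ => Finset.sum_congr rfl fun r _ => by ring
  rw [h6, h4, ← h5, h2]
  linear_combination -h1

end Dichotomy

/-! ### Local persistence of positivity -/

section Perturbation

open Filter Topology

variable {V : Type*} [Fintype V]

theorem continuous_form {Z : Type*} [TopologicalSpace Z] {ω : Z → V → V → ℝ} (hω : Continuous ω)
    {y : Z → V → ℝ} (hy : Continuous y) : Continuous fun z => form (ω z) (y z) (y z) := by
  have h1 : ∀ i j, Continuous fun z => ω z i j := fun i j =>
    (continuous_apply j).comp ((continuous_apply i).comp hω)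
  have h2 : ∀ i, Continuous fun z => y z i := fun i => (continuous_apply i).comp hy
  unfold form
  simp only [lap_apply]
  exact continuous_finsetSum _ fun i _ => (h2 i).mul
    (continuous_finsetSum _ fun j _ => (h1 i j).mul ((h2 i).sub (h2 j)))

theorem form_add_of_lap_eq_zero {ω : V → V → ℝ} (hs : ∀ i j, ω i j = ω j i) {w : V → ℝ}
    (hw : lap ω w = 0) (y : V → ℝ) : form ω (w + y) (w + y) = form ω y y := by
  rw [form_add_right, form_add_left, form_add_left, form_of_lap_eq_zero hw, form_of_lap_eq_zero hw,
    form_comm hs w y, form_of_lap_eq_zero hw]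
  ring

/-- Positivity of forms that all vanish on `K` is a local question: by homogeneity it need only be
checked on the compact unit sphere of a complement of `K`. The predicate `P` restricts the
parameters under consideration. -/
theorem eventually_pos {Z : Type*} [TopologicalSpace Z] {ω : Z → V → V → ℝ} {z₀ : Z}
    (hs : ∀ z i j, ω z i j = ω z j i) {K : Submodule ℝ (V → ℝ)}
    (hK : ∀ z, ∀ y ∈ K, lap (ω z) y = 0) (P : Z → Prop)
    (hloc : ∀ y ∉ K, ∀ᶠ zy : Z × (V → ℝ) in 𝓝 (z₀, y), P zy.1 → 0 < form (ω zy.1) zy.2 zy.2) :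
    ∀ᶠ z in 𝓝 z₀, P z → ∀ y ∉ K, 0 < form (ω z) y y := by
  obtain ⟨C, hC⟩ := Submodule.exists_isCompl K
  have hcomp : IsCompact ((C : Set (V → ℝ)) ∩ Metric.sphere 0 1) :=
    (isCompact_sphere _ _).inter_left C.closed_of_finiteDimensional
  have hne : ∀ y ∈ C, y ≠ 0 → y ∉ K := fun y hy h0 hyK =>
    h0 ((Submodule.disjoint_def.mp hC.disjoint) y hyK hy)
  have := hcomp.eventually_forall_of_forall_eventually (x₀ := z₀)
    (P := fun z y => P z → 0 < form (ω z) y y) (fun y hy => by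
      refine hloc y (hne y hy.1 ?_)
      rintro rfl
      simpa using hy.2)
  filter_upwards [this] with z hz hP y hy
  obtain ⟨k, hk, c, hc, rfl⟩ := Submodule.mem_sup.mp (hC.sup_eq_top ▸ Submodule.mem_top : y ∈ K ⊔ C)
  have hc0 : c ≠ 0 := by
    rintro rfl
    exact hy (by simpa using hk)
  have hn : ‖c‖ ≠ 0 := norm_ne_zero_iff.mpr hc0
  rw [form_add_of_lap_eq_zero (hs z) (hK z k hk)]
  have h1 := hz (‖c‖⁻¹ • c) ⟨C.smul_mem _ hc, by simp [norm_smul, hn]⟩ hP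
  rw [form_smul_left, form_smul_right] at h1
  have h2 : 0 < ‖c‖⁻¹ := inv_pos.mpr (norm_pos_iff.mpr hc0)
  exact pos_of_mul_pos_right (pos_of_mul_pos_right h1 h2.le) h2.le

theorem eventually_pos_of_pos {Z : Type*} [TopologicalSpace Z] {ω : Z → V → V → ℝ}
    (hω : Continuous ω) {z₀ : Z} (hs : ∀ z i j, ω z i j = ω z j i) {K : Submodule ℝ (V → ℝ)}
    (hK : ∀ z, ∀ y ∈ K, lap (ω z) y = 0) (hpos : ∀ y ∉ K, 0 < form (ω z₀) y y) :
    ∀ᶠ z in 𝓝 z₀, ∀ y ∉ K, 0 < form (ω z) y y := by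
  have := eventually_pos hs hK (fun _ => True) (z₀ := z₀) fun y hy => by
    have hc := continuous_form (hω.comp continuous_fst) (continuous_snd (X := Z) (Y := V → ℝ))
    filter_upwards [hc.continuousAt.eventually_const_lt (hpos y hy)] with zy h _ using h
  filter_upwards [this] with z hz using hz trivial

end Perturbation

/-! ### Weighted averages of stresses -/

section Family

set_option linter.unusedSectionVars false

open Filter Topology

variable {V : Type*} [Fintype V] [DecidableEq V] {d : ℕ}

/-- A choice of the stresses of `H + ab` for all pairs of distinct `a, b ∈ X`, extended by zero. -/
structure IsTauFamily (H : SimpleGraph V) (p : V → Fin d → ℝ) (X : Finset V)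
    (τ : V → V → V → V → ℝ) : Prop where
  isTau : ∀ a ∈ X, ∀ b ∈ X, a ≠ b → IsTau H p a b (τ a b)
  swap : ∀ a b, τ a b = τ b a
  zero : ∀ a b, ¬ (a ∈ X ∧ b ∈ X ∧ a ≠ b) → τ a b = 0

theorem exists_isTauFamily {H : SimpleGraph V} {p : V → Fin d → ℝ} {X : Finset V}
    (hH : ∀ ω, Stress H p ω → ω = 0)
    (h : ∀ a ∈ X, ∀ b ∈ X, a ≠ b → ∃ τ, IsTau H p a b τ) :
    ∃ τ, IsTauFamily H p X τ := by
  classical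
  have h' : ∀ a b, ∃ τ, (a ∈ X ∧ b ∈ X ∧ a ≠ b → IsTau H p a b τ) ∧
      (¬ (a ∈ X ∧ b ∈ X ∧ a ≠ b) → τ = 0) := by
    intro a b
    by_cases hab : a ∈ X ∧ b ∈ X ∧ a ≠ b
    · obtain ⟨τ, hτ⟩ := h a hab.1 b hab.2.1 hab.2.2
      exact ⟨τ, fun _ => hτ, fun hn => absurd hab hn⟩
    · exact ⟨0, fun hn => absurd hn hab, fun _ => rfl⟩
  choose τ hτ hτ0 using h'
  refine ⟨τ, fun a ha b hb hab => hτ a b ⟨ha, hb, hab⟩, fun a b => ?_, hτ0⟩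
  by_cases hab : a ∈ X ∧ b ∈ X ∧ a ≠ b
  · exact (hτ a b hab).unique hH (hτ b a ⟨hab.2.1, hab.1, hab.2.2.symm⟩).swap
  · rw [hτ0 a b hab, hτ0 b a fun h => hab ⟨h.2.1, h.1, h.2.2.symm⟩]

namespace IsTauFamily

variable {H : SimpleGraph V} {p : V → Fin d → ℝ} {X : Finset V} {τ : V → V → V → V → ℝ}

theorem symm (h : IsTauFamily H p X τ) (a b i j : V) : τ a b i j = τ a b j i := by
  by_cases hab : a ∈ X ∧ b ∈ X ∧ a ≠ b
  · exact (h.isTau a hab.1 b hab.2.1 hab.2.2).symm i j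
  · simp [h.zero a b hab]

theorem diag (h : IsTauFamily H p X τ) (a b i : V) : τ a b i i = 0 := by
  by_cases hab : a ∈ X ∧ b ∈ X ∧ a ≠ b
  · exact (h.isTau a hab.1 b hab.2.1 hab.2.2).diag i
  · simp [h.zero a b hab]

theorem eq (h : IsTauFamily H p X τ) (a b : V) (c : Fin d) : lap (τ a b) (fun v => p v c) = 0 := by
  by_cases hab : a ∈ X ∧ b ∈ X ∧ a ≠ b
  · exact (h.isTau a hab.1 b hab.2.1 hab.2.2).eq c
  · rw [h.zero a b hab]; ext i; simp [lap_apply]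

end IsTauFamily

/-- The quadratic combination `½ ∑ λ_a λ_b τ_ab`. -/
noncomputable def avg (τ : V → V → V → V → ℝ) (l : V → ℝ) : V → V → ℝ :=
  ∑ a, ∑ b, (l a * l b / 2) • τ a b

theorem lap_avg (τ : V → V → V → V → ℝ) (l y : V → ℝ) :
    lap (avg τ l) y = ∑ a, ∑ b, (l a * l b / 2) • lap (τ a b) y := by
  simp only [avg, lap_sum, lap_smul]

theorem avg_apply (τ : V → V → V → V → ℝ) (l : V → ℝ) (i j : V) :
    avg τ l i j = ∑ a, ∑ b, l a * l b / 2 * τ a b i j := by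
  simp [avg, Finset.sum_apply]

theorem continuous_avg (τ : V → V → V → V → ℝ) : Continuous (avg τ) :=
  continuous_finsetSum _ fun a _ => continuous_finsetSum _ fun b _ =>
    (((continuous_apply a).mul (continuous_apply b)).div_const 2).smul continuous_const

theorem avg_smul (τ : V → V → V → V → ℝ) (t : ℝ) (l : V → ℝ) :
    avg τ (t • l) = (t * t) • avg τ l := by
  simp only [avg, Finset.smul_sum, smul_smul, Pi.smul_apply, smul_eq_mul]
  exact Finset.sum_congr rfl fun a _ => Finset.sum_congr rfl fun b _ => by congr 1; ring

/-- The first-order change of `avg τ l` in the direction of the basis vector at `e`; there is no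
second-order term because `τ e e` vanishes. -/
theorem avg_add_single {τ : V → V → V → V → ℝ} (hswap : ∀ a b, τ a b = τ b a) {e : V}
    (he : τ e e = 0) (t : ℝ) (l : V → ℝ) :
    avg τ (l + t • Pi.single e 1) = avg τ l + t • ∑ a, l a • τ a e := by
  ext i j
  simp only [avg_apply, Pi.add_apply, Pi.smul_apply, smul_eq_mul, Finset.sum_apply]
  have h1 : ∀ a b, (l a + t * (Pi.single e 1 : V → ℝ) a) * (l b + t * (Pi.single e 1 : V → ℝ) b) / 2
      * τ a b i j = l a * l b / 2 * τ a b i j +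
      (if b = e then t * l a / 2 * τ a e i j else 0) +
      (if a = e then t * l b / 2 * τ b e i j else 0) := by
    intro a b
    by_cases h1 : a = e <;> by_cases h2 : b = e
    · subst h1 h2; simp [he]
    · subst h1; simp [h2, hswap a b]; ring
    · subst h2; simp [h1]; ring
    · simp [h1, h2]
  simp only [h1, Finset.sum_add_distrib, Finset.sum_ite_eq', Finset.mem_univ, if_true]
  rw [Finset.sum_comm (f := fun a b => if a = e then t * l b / 2 * τ b e i j else 0)]
  simp only [Finset.sum_ite_eq', Finset.mem_univ, if_true]
  rw [add_assoc, ← Finset.sum_add_distrib, Finset.mul_sum]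
  congr 1
  exact Finset.sum_congr rfl fun a _ => by ring

/-- The restrictions to `V` of affine functions along `p`. -/
def affSpace (p : V → Fin d → ℝ) : Submodule ℝ (V → ℝ) where
  carrier := {y | ∃ (α : ℝ) (r : Fin d → ℝ), ∀ i, y i = α + ∑ c, r c * p i c}
  zero_mem' := ⟨0, 0, by simp⟩
  add_mem' := by
    rintro y w ⟨α, r, h⟩ ⟨α', r', h'⟩
    refine ⟨α + α', r + r', fun i => ?_⟩
    simp only [Pi.add_apply, h, h', add_mul, Finset.sum_add_distrib]; ring
  smul_mem' := by
    rintro t y ⟨α, r, h⟩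
    refine ⟨t * α, t • r, fun i => ?_⟩
    simp only [Pi.smul_apply, h, smul_eq_mul, mul_add, Finset.mul_sum, mul_assoc]

theorem lap_of_mem_affSpace {p : V → Fin d → ℝ} {ω : V → V → ℝ}
    (h : ∀ c, lap ω (fun v => p v c) = 0) {y : V → ℝ} (hy : y ∈ affSpace p) : lap ω y = 0 := by
  obtain ⟨α, r, hy⟩ := hy
  have : y = (fun _ => α) + ∑ c, r c • fun v => p v c := by
    ext i; simp [hy]
  rw [this, map_add, lap_const, map_sum]
  simp [h]

/-- `l` is a weight vector supported on `X`, of nonzero total weight, whose associated form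
is positive outside `K`, where it vanishes. -/
structure Good (τ : V → V → V → V → ℝ) (X : Finset V) (K : Submodule ℝ (V → ℝ)) (l : V → ℝ) :
    Prop where
  supp : ∀ v ∉ X, l v = 0
  sum : ∑ v, l v ≠ 0
  ker : ∀ y ∈ K, lap (avg τ l) y = 0
  pos : ∀ y ∉ K, 0 < form (avg τ l) y y

theorem Good.nonneg {τ : V → V → V → V → ℝ} {X : Finset V} {K : Submodule ℝ (V → ℝ)} {l : V → ℝ}
    (h : Good τ X K l) (y : V → ℝ) : 0 ≤ form (avg τ l) y y := by
  by_cases hy : y ∈ K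
  · rw [form_of_lap_eq_zero (h.ker y hy)]
  · exact (h.pos y hy).le

variable {H : SimpleGraph V} {p : V → Fin d → ℝ} {X : Finset V} {τ : V → V → V → V → ℝ}

theorem IsTauFamily.avg_symm (h : IsTauFamily H p X τ) (l : V → ℝ) (i j : V) :
    avg τ l i j = avg τ l j i := by
  simp only [avg_apply, h.symm _ _ i j]

theorem IsTauFamily.lap_avg_aff (h : IsTauFamily H p X τ) (l : V → ℝ) {y : V → ℝ}
    (hy : y ∈ affSpace p) : lap (avg τ l) y = 0 := by
  rw [lap_avg]
  simp [lap_of_mem_affSpace (h.eq _ _) hy]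

theorem eventually_sum_ne_zero {l : V → ℝ} (hl : ∑ v, l v ≠ 0) (w : V → ℝ) :
    ∀ᶠ t : ℝ in 𝓝 0, ∑ v, (l + t • w) v ≠ 0 := by
  have hc : Continuous fun t : ℝ => ∑ v, (l + t • w) v := by
    simp only [Pi.add_apply, Pi.smul_apply, smul_eq_mul]
    fun_prop
  exact hc.continuousAt.eventually_ne (by simpa using hl)

theorem continuous_line (l w : V → ℝ) : Continuous fun t : ℝ => l + t • w :=
  continuous_const.add (continuous_id.smul continuous_const)

/-- A small move of the weights towards a vertex `e` along which the form strictly increases on the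
one-dimensional excess kernel removes this excess. -/
theorem Good.improve {K : Submodule ℝ (V → ℝ)} {l : V → ℝ} (h : IsTauFamily H p X τ)
    (hl : Good τ X K l) {k : V → ℝ} (hkK : k ∈ K)
    (hK : ∀ y ∈ K, ∃ β : ℝ, ∃ w ∈ affSpace p, y = w + β • k)
    {e : V} (he : e ∈ X) (hq : form (∑ a, l a • τ a e) k k ≠ 0) :
    ∃ l', Good τ X (affSpace p) l' := by
  obtain ⟨s, hs⟩ : ∃ s : ℝ, 0 < s * form (∑ a, l a • τ a e) k k :=
    ⟨form (∑ a, l a • τ a e) k k, mul_self_pos.mpr hq⟩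
  set M : V → V → ℝ := ∑ a, l a • τ a e with hM
  have hMs : ∀ i j, M i j = M j i := fun i j => by
    simp only [hM, Finset.sum_apply, Pi.smul_apply, h.symm _ _ i j]
  have hMaff : ∀ y ∈ affSpace p, lap M y = 0 := fun y hy => by
    simp [hM, lap_sum, lap_smul, lap_of_mem_affSpace (h.eq _ _) hy]
  have hexp : ∀ t : ℝ, avg τ (l + t • (s • Pi.single e 1)) = avg τ l + t • (s • M) := by
    intro t
    rw [smul_smul, avg_add_single h.swap (h.zero e e (by simp)), smul_smul]
  have hline := continuous_line l (s • Pi.single e 1)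
  have h1 : ∀ᶠ t : ℝ in 𝓝 0, 0 < t → ∀ y ∉ affSpace p,
      0 < form (avg τ (l + t • (s • Pi.single e 1))) y y := by
    refine eventually_pos (ω := fun t : ℝ => avg τ (l + t • (s • Pi.single e 1)))
      (fun t => h.avg_symm _) (fun t y hy => h.lap_avg_aff _ hy) (fun t => 0 < t) fun y hy => ?_
    by_cases hyK : y ∈ K
    · obtain ⟨β, w, hw, rfl⟩ := hK y hyK
      have hβ : β ≠ 0 := by
        rintro rfl
        exact hy (by simpa using hw)
      have hpos : 0 < form (s • M) (w + β • k) (w + β • k) := by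
        rw [form_smul, form_add_of_lap_eq_zero hMs (hMaff w hw), form_smul_left, form_smul_right]
        have := mul_pos hs (mul_self_pos.mpr hβ)
        linarith
      have hc := continuous_form (ω := fun _ : ℝ × (V → ℝ) => s • M) continuous_const
        (continuous_snd (X := ℝ) (Y := V → ℝ))
      filter_upwards [(hc.tendsto ((0 : ℝ), w + β • k)).eventually_const_lt hpos] with ty hty ht
      -- on the excess kernel the base form is only nonnegative; the first-order term decides
      rw [hexp, form_add, form_smul]
      exact add_pos_of_nonneg_of_pos (hl.nonneg _) (mul_pos ht hty)
    · have hc := continuous_form (((continuous_avg τ).comp hline).comp continuous_fst)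
        (continuous_snd (X := ℝ) (Y := V → ℝ))
      have hy0 : 0 < form (avg τ (l + (0 : ℝ) • (s • Pi.single e 1))) y y := by
        rw [zero_smul, add_zero]
        exact hl.pos y hyK
      filter_upwards [(hc.tendsto ((0 : ℝ), y)).eventually_const_lt hy0] with ty hty _ using hty
  obtain ⟨t, ht, h2, h3⟩ := ((h1.and (eventually_sum_ne_zero hl.sum _)).filter_mono
    nhdsWithin_le_nhds |>.and (eventually_mem_nhdsWithin (s := Set.Ioi (0 : ℝ)))).exists.imp
      fun t ht => (⟨ht.2, ht.1.1, ht.1.2⟩ : _ ∧ _ ∧ _)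
  refine ⟨_, fun v hv => ?_, h3, fun y hy => h.lap_avg_aff _ hy, h2 ht⟩
  have hve : v ≠ e := fun hh => hv (hh ▸ he)
  simp [hl.supp v hv, hve]

/-- A small move of the weights towards `e` that does not disturb the kernel. -/
theorem Good.move {K : Submodule ℝ (V → ℝ)} {l : V → ℝ} (h : IsTauFamily H p X τ)
    (hl : Good τ X K l) {e : V} (he : e ∈ X)
    (hK : ∀ y ∈ K, lap (∑ a, l a • τ a e) y = 0) :
    ∃ t : ℝ, t ≠ 0 ∧ Good τ X K (l + t • Pi.single e 1) := by
  have hker : ∀ t : ℝ, ∀ y ∈ K, lap (avg τ (l + t • Pi.single e 1)) y = 0 := by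
    intro t y hy
    rw [avg_add_single h.swap (h.zero e e (by simp)), lap_add, lap_smul, hl.ker y hy, hK y hy]
    simp
  have h1 := eventually_pos_of_pos (z₀ := (0 : ℝ))
    ((continuous_avg τ).comp (continuous_line l (Pi.single e 1)))
    (fun t => h.avg_symm _) hker (by simpa using hl.pos)
  obtain ⟨t, ht, h2, h3⟩ := ((h1.and (eventually_sum_ne_zero hl.sum (Pi.single e 1))).filter_mono
    nhdsWithin_le_nhds |>.and (eventually_mem_nhdsWithin (s := {(0 : ℝ)}ᶜ))).exists.imp
      fun t ht => (⟨ht.2, ht.1.1, ht.1.2⟩ : _ ∧ _ ∧ _)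
  refine ⟨t, ht, fun v hv => ?_, h3, hker t, h2⟩
  have hve : v ≠ e := fun hh => hv (hh ▸ he)
  simp [hl.supp v hv, hve]

end Family

/-! ### Choice of good weights -/

section Choice

set_option linter.unusedSectionVars false

variable {V : Type*} [Fintype V] [DecidableEq V] {d : ℕ}
  {H : SimpleGraph V} {p : V → Fin d → ℝ} {X : Finset V} {τ : V → V → V → V → ℝ}

/-- Barycentric coordinates with respect to the `d + 1` points indexed by `X`. -/
theorem exists_barycentric (hp : Gen p) (hX : X.card = d + 1) :
    ∃ L : (Fin d → ℝ) → V → ℝ, Continuous L ∧ (∀ z, ∀ v ∉ X, L z v = 0) ∧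
      (∀ z, ∑ v, L z v = 1) ∧ (∀ z c, ∑ v, L z v * p v c = z c) := by
  let B : (X → ℝ) →ₗ[ℝ] ℝ × (Fin d → ℝ) :=
    { toFun := fun w => (∑ v, w v, fun c => ∑ v, w v * p v c)
      map_add' := by
        intro w w'
        ext <;> simp [Finset.sum_add_distrib, add_mul]
      map_smul' := by
        intro t w
        ext <;> simp [Finset.mul_sum, mul_assoc] }
  have hB : Function.Injective B := by
    rw [← LinearMap.ker_eq_bot, LinearMap.ker_eq_bot']
    intro w hw
    have h1 : ∑ v, w v = 0 := congrArg Prod.fst hw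
    have h2 : ∀ c, ∑ v, w v * p v c = 0 := fun c => congrFun (congrArg Prod.snd hw) c
    have := hp.affine hX.le (w := fun v => if h : v ∈ X then w ⟨v, h⟩ else 0)
      (by rw [← Finset.sum_coe_sort]; simpa using h1)
      (fun c => by rw [← Finset.sum_coe_sort]; simpa using h2 c)
    ext ⟨v, hv⟩
    simpa [hv] using this v hv
  let e := LinearMap.linearEquivOfInjective B hB (by simp [hX, add_comm])
  have he : ∀ u, B (e.symm u) = u := fun u => e.apply_symm_apply u
  have hsum : ∀ (u : ℝ × (Fin d → ℝ)) (f : V → ℝ),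
      ∑ v, (if h : v ∈ X then e.symm u ⟨v, h⟩ else 0) * f v = ∑ v : X, e.symm u v * f v := by
    intro u f
    rw [← Finset.sum_subset (Finset.subset_univ X) (fun v _ hv => by simp [hv]),
      ← Finset.sum_coe_sort]
    simp
  refine ⟨fun z v => if h : v ∈ X then e.symm (1, z) ⟨v, h⟩ else 0, ?_, ?_, ?_, ?_⟩
  · refine continuous_pi fun v => ?_
    by_cases h : v ∈ X
    · simp only [h, dif_pos]
      have h1 : Continuous e.symm := e.symm.toLinearMap.continuous_of_finiteDimensional
      exact (continuous_apply _).comp (h1.comp (by fun_prop))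
    · simp only [h, dif_neg, not_false_eq_true]
      exact continuous_const
  · intro z v hv
    simp [hv]
  · intro z
    have h1 := hsum (1, z) fun _ => 1
    simp only [mul_one] at h1
    rw [h1]
    exact congrArg Prod.fst (he (1, z))
  · intro z c
    rw [hsum (1, z) fun v => p v c]
    exact congrFun (congrArg Prod.snd (he (1, z))) c

/-- The affine functions along `p` are determined by their values on the `d + 1` affinely independent
points of `X`. -/
theorem finrank_affSpace (hp : Gen p) (hX : X.card = d + 1) :
    d + 1 ≤ Module.finrank ℝ (affSpace p) := by
  obtain ⟨L, -, -, hL1, hLz⟩ := exists_barycentric hp hX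
  let A : ℝ × (Fin d → ℝ) →ₗ[ℝ] (V → ℝ) :=
    { toFun := fun u i => u.1 + ∑ c, u.2 c * p i c
      map_add' := by
        intro u w
        ext i
        simp only [Prod.fst_add, Prod.snd_add, Pi.add_apply, add_mul, Finset.sum_add_distrib]
        ring
      map_smul' := by
        intro t u
        ext i
        simp [Finset.mul_sum, mul_assoc, mul_add] }
  have hz : ∀ u z, ∑ v, L z v * A u v = u.1 + ∑ c, u.2 c * z c := by
    intro u z
    simp only [A, LinearMap.coe_mk, AddHom.coe_mk, mul_add, Finset.sum_add_distrib,
      ← Finset.sum_mul, hL1, one_mul, Finset.mul_sum]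
    rw [Finset.sum_comm]
    congr 1
    refine Finset.sum_congr rfl fun c _ => ?_
    rw [← hLz z c, Finset.mul_sum]
    exact Finset.sum_congr rfl fun v _ => by ring
  have hA : Function.Injective A := by
    rw [← LinearMap.ker_eq_bot, LinearMap.ker_eq_bot']
    intro u hu
    have h0 := hz u 0
    have h1 := fun c => hz u (Pi.single c 1)
    simp only [hu, Pi.zero_apply, mul_zero, Finset.sum_const_zero, add_zero] at h0 h1
    ext c
    · exact h0.symm
    · have := h1 c
      rw [← h0] at this
      simpa [Pi.single_apply] using this.symm
  have hle : LinearMap.range A ≤ affSpace p := by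
    rintro _ ⟨u, rfl⟩
    exact ⟨u.1, u.2, fun i => rfl⟩
  have h1 := Submodule.finrank_mono hle
  rw [LinearMap.finrank_range_of_inj hA] at h1
  simpa [add_comm] using h1

/-- Weights concentrated on two vertices give a multiple of a single stress. -/
theorem avg_two (h : IsTauFamily H p X τ) (x y : V) (t : ℝ) :
    avg τ (Pi.single x 1 + t • Pi.single y 1) = t • τ x y := by
  have h0 : avg τ (0 + (1 : ℝ) • Pi.single x 1) = 0 := by
    rw [avg_add_single h.swap (h.zero x x (by simp))]
    simp [avg]
  rw [avg_add_single h.swap (h.zero y y (by simp))]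
  simp only [zero_add, one_smul] at h0
  rw [h0, zero_add]
  congr 1
  rw [Finset.sum_eq_single x]
  · simp
  · intro b _ hb; simp [hb]
  · simp

theorem sum_two (x y e : V) (t : ℝ) :
    ∑ a, (Pi.single x 1 + t • Pi.single y 1 : V → ℝ) a • τ a e = τ x e + t • τ y e := by
  simp only [Pi.add_apply, Pi.smul_apply, add_smul, Finset.sum_add_distrib, smul_eq_mul, mul_smul,
    ← Finset.smul_sum]
  congr 1
  · rw [Finset.sum_eq_single x]
    · simp
    · intro b _ hb; simp [hb]
    · simp
  · congr 1
    rw [Finset.sum_eq_single y]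
    · simp
    · intro b _ hb; simp [hb]
    · simp

/-- Weights on the edge `xy` alone are good when `τ x y` has the sign `s`; the factor `c` leaves room to
keep the total weight nonzero. -/
theorem good_two (h : IsTauFamily H p X τ) {x y : V} (hx : x ∈ X) (hy : y ∈ X)
    {s : ℝ} (hpos : ∀ w, 0 ≤ s * form (τ x y) w w) (hs : s ≠ 0) {c : ℝ} (hc : 0 < c)
    (hcs : 1 + c * s ≠ 0) :
    Good τ X (LinearMap.ker (lap (τ x y))) (Pi.single x 1 + (c * s) • Pi.single y 1) := by
  refine ⟨fun v hv => ?_, ?_, fun w hw => ?_, fun w hw => ?_⟩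
  · have h1 : v ≠ x := fun e => hv (e ▸ hx)
    have h2 : v ≠ y := fun e => hv (e ▸ hy)
    simp [h1, h2]
  · simpa [Finset.sum_add_distrib, ← Finset.mul_sum] using hcs
  · rw [avg_two h, lap_smul, LinearMap.mem_ker.mp hw, smul_zero]
  · rw [avg_two h, form_smul, mul_assoc]
    refine mul_pos hc (lt_of_le_of_ne (hpos w) fun h0 => hw ?_)
    have h1 := lap_eq_zero_of_null (ω := s • τ x y) (fun i j => by simp [h.symm x y i j])
      (fun y => by rw [form_smul]; exact hpos y) (k := w) (by rw [form_smul]; exact h0.symm)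
    rw [lap_smul] at h1
    exact (smul_eq_zero.mp h1).resolve_left hs

/-- There are weights whose averaged stress is positive outside a subspace `K` of dimension at most
`d + 2` that lies in the kernel of every `τ a b`. Either the whole kernel of `τ x y` serves as `K`, or
the weights on `x` and `y` can be perturbed so that the affine functions do. -/
theorem exists_good (hp : Gen p) (hX : X.card = d + 1) (hH : ∀ ω, Stress H p ω → ω = 0)
    (h : IsTauFamily H p X τ) {x y : V} (hx : x ∈ X) (hy : y ∈ X) (hxy : x ≠ y)
    {s : ℝ} (hs : s = 1 ∨ s = -1) (hpos : ∀ w, 0 ≤ s * form (τ x y) w w)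
    (hdim : Module.finrank ℝ (LinearMap.ker (lap (τ x y))) ≤ d + 2) :
    ∃ K : Submodule ℝ (V → ℝ), Module.finrank ℝ K ≤ d + 2 ∧
      (∀ a b, ∀ w ∈ K, lap (τ a b) w = 0) ∧ ∃ l, Good τ X K l := by
  have haff := finrank_affSpace hp hX
  have hs0 : s ≠ 0 := by rcases hs with rfl | rfl <;> norm_num
  have h12 : 1 + 2 * s ≠ 0 := by rcases hs with rfl | rfl <;> norm_num
  have h13 : 1 + 3 * s ≠ 0 := by rcases hs with rfl | rfl <;> norm_num
  -- two candidate ratios: a linear condition on the ratio met below can fail for one of them only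
  have g2 := good_two h hx hy hpos hs0 (c := 2) (by norm_num) h12
  have g3 := good_two h hx hy hpos hs0 (c := 3) (by norm_num) h13
  set N := LinearMap.ker (lap (τ x y)) with hN
  have hle : affSpace p ≤ N := fun w hw => LinearMap.mem_ker.mpr (lap_of_mem_affSpace (h.eq x y) hw)
  have hfin : (∃ l, Good τ X (affSpace p) l) → ∃ K : Submodule ℝ (V → ℝ),
      Module.finrank ℝ K ≤ d + 2 ∧ (∀ a b, ∀ w ∈ K, lap (τ a b) w = 0) ∧ ∃ l, Good τ X K l :=
    fun hl => ⟨affSpace p, (Submodule.finrank_mono hle).trans hdim,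
      fun a b w hw => lap_of_mem_affSpace (h.eq a b) hw, hl⟩
  by_cases heq : affSpace p = N
  · exact hfin ⟨_, heq ▸ g2⟩
  obtain ⟨k, hkN, hk⟩ := SetLike.exists_of_lt (lt_of_le_of_ne hle heq)
  have hNeq : affSpace p ⊔ Submodule.span ℝ {k} = N := by
    refine Submodule.eq_of_le_of_finrank_le
      (sup_le hle ((Submodule.span_singleton_le_iff_mem _ _).mpr hkN)) ?_
    have h1 : affSpace p < affSpace p ⊔ Submodule.span ℝ {k} :=
      lt_of_le_of_ne le_sup_left fun e => hk (by
        rw [e]; exact (le_sup_right : _ ≤ affSpace p ⊔ _) (Submodule.mem_span_singleton_self k))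
    have h2 := Submodule.finrank_lt_finrank_of_lt h1
    omega
  have hNk : ∀ w ∈ N, ∃ β : ℝ, ∃ u ∈ affSpace p, w = u + β • k := by
    intro w hw
    rw [← hNeq] at hw
    obtain ⟨u, hu, v, hv, rfl⟩ := Submodule.mem_sup.mp hw
    obtain ⟨β, rfl⟩ := Submodule.mem_span_singleton.mp hv
    exact ⟨β, u, hu, rfl⟩
  have hk0 : lap (τ x y) k = 0 := hkN
  have hdich : ∀ a b, form (τ a b) k k = 0 → ∀ w ∈ N, lap (τ a b) w = 0 := by
    intro a b hq w hw
    by_cases hab : a ∈ X ∧ b ∈ X ∧ a ≠ b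
    · have h1 : lap (τ a b) k = 0 := by
        refine IsTau.lap_eq_zero_of_form hp hH (h.isTau x hx y hy hxy)
          (h.isTau a hab.1 b hab.2.1 hab.2.2) hab.2.2 hk0 (fun m hm => ?_) hq
        obtain ⟨β, u, ⟨α, r, hu⟩, rfl⟩ := hNk m hm
        exact ⟨α, r, β, fun i => by simp [hu]⟩
      obtain ⟨β, u, hu, rfl⟩ := hNk w hw
      rw [map_add, map_smul, h1, lap_of_mem_affSpace (h.eq a b) hu]; simp
    · rw [h.zero a b hab]; ext i; simp [lap_apply]
  by_cases hall : ∀ a b, form (τ a b) k k = 0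
  · exact ⟨N, hdim, fun a b => hdich a b (hall a b), _, g2⟩
  refine hfin ?_
  push Not at hall
  obtain ⟨a, b, hab⟩ := hall
  have habX : a ∈ X ∧ b ∈ X ∧ a ≠ b := by
    by_contra hn
    rw [h.zero a b hn] at hab
    exact hab (by simp [form, lap_apply])
  -- if every first-order variation at weights on `x, y` vanishes, move towards `a` first and then
  -- vary at `b`
  by_cases h1 : ∀ e ∈ X, form (τ x e) k k = 0 ∧ form (τ y e) k k = 0
  · obtain ⟨t, ht, hg⟩ := g2.move h habX.1 fun w hw => by
      rw [sum_two, lap_add, lap_smul, hdich x a (h1 a habX.1).1 w hw,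
        hdich y a (h1 a habX.1).2 w hw]
      simp
    refine hg.improve h hkN hNk habX.2.1 ?_
    have h2 : ∑ v, (Pi.single x 1 + (2 * s) • Pi.single y 1 + t • Pi.single a 1 : V → ℝ) v • τ v b =
        τ x b + (2 * s) • τ y b + t • τ a b := by
      rw [← sum_two x y b (2 * s)]
      simp only [Pi.add_apply (_ + _), add_smul, Finset.sum_add_distrib]
      congr 1
      rw [Finset.sum_eq_single a]
      · simp
      · intro c _ hc; simp [hc]
      · simp
    rw [h2, form_add, form_add, form_smul, form_smul, (h1 b habX.2.1).1, (h1 b habX.2.1).2]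
    simpa using ⟨ht, hab⟩
  · push Not at h1
    obtain ⟨e, he, hne⟩ := h1
    by_cases h2 : form (τ x e) k k + 2 * s * form (τ y e) k k = 0
    · refine g3.improve h hkN hNk he ?_
      rw [sum_two, form_add, form_smul]
      intro h3
      have h4 : form (τ y e) k k = 0 := by
        have : s * form (τ y e) k k = 0 := by linarith
        exact (mul_eq_zero.mp this).resolve_left hs0
      exact hne (by rw [h4] at h2; simpa using h2) h4
    · refine g2.improve h hkN hNk he ?_
      rwa [sum_two, form_add, form_smul]

end Choice

/-! ### Stresses of the one-extension -/

section Extension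

set_option linter.unusedSectionVars false

open Filter Topology

variable {V : Type*} [Fintype V] [DecidableEq V] {d : ℕ}
  {p : V → Fin d → ℝ} {X : Finset V} {τ : V → V → V → V → ℝ}

/-- The weights `N_ij - λ_i λ_j` off the diagonal, where `N = avg τ λ`, and `λ` at the new
vertex. -/
noncomputable def extWeight (τ : V → V → V → V → ℝ) (l : V → ℝ) : Option V → Option V → ℝ :=
  optWeight (fun i j => if i = j then 0 else avg τ l i j - l i * l j) l

theorem lap_extWeight_some (τ : V → V → V → V → ℝ) {l : V → ℝ} (hl : ∑ v, l v = 1)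
    (y : Option V → ℝ) (i : V) :
    lap (extWeight τ l) y (some i) =
      lap (avg τ l) (fun v => y (some v)) i + l i * (∑ v, l v * y (some v) - y none) := by
  rw [extWeight, lap_optWeight_some, lap_apply, lap_apply]
  have h1 : ∀ j, (if i = j then 0 else avg τ l i j - l i * l j) * (y (some i) - y (some j)) =
      avg τ l i j * (y (some i) - y (some j)) - l i * y (some i) * l j +
        l i * (l j * y (some j)) := by
    intro j
    by_cases e : i = j
    · subst e; simp; ring
    · rw [if_neg e]; ring
  simp only [h1, Finset.sum_add_distrib, Finset.sum_sub_distrib, ← Finset.mul_sum, hl]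
  ring

theorem lap_extWeight_none (τ : V → V → V → V → ℝ) {l : V → ℝ} (hl : ∑ v, l v = 1)
    (y : Option V → ℝ) :
    lap (extWeight τ l) y none = y none - ∑ v, l v * y (some v) := by
  rw [extWeight, lap_optWeight_none]
  simp only [mul_sub, Finset.sum_sub_distrib, ← Finset.sum_mul, hl, one_mul]

/-- Eliminating the new vertex: its contribution is the square of the deviation of its value from
the weighted mean of its neighbours. -/
theorem form_extWeight (τ : V → V → V → V → ℝ) {l : V → ℝ} (hl : ∑ v, l v = 1)
    (y : Option V → ℝ) :
    form (extWeight τ l) y y = form (avg τ l) (fun v => y (some v)) (fun v => y (some v)) +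
      (∑ v, l v * y (some v) - y none) ^ 2 := by
  rw [form, Fintype.sum_option, lap_extWeight_none τ hl]
  simp only [lap_extWeight_some τ hl, mul_add, Finset.sum_add_distrib, form]
  have : ∑ x, y (some x) * (l x * (∑ v, l v * y (some v) - y none)) =
      (∑ x, l x * y (some x)) * (∑ v, l v * y (some v) - y none) := by
    rw [Finset.sum_mul]
    exact Finset.sum_congr rfl fun v _ => by ring
  rw [this]; ring

variable {G' : SimpleGraph (Option V)}

/-- The new vertex placed at the point with barycentric coordinates `l`: off the edges of `H` the entry
`l i * l j` of `avg τ l` coming from the added edges cancels. -/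
theorem stress_extWeight (h : IsTauFamily (G'.comap some) p X τ)
    (hX : ∀ u, G'.Adj (some u) none ↔ u ∈ X) {l : V → ℝ} (hl : ∑ v, l v = 1)
    (hsupp : ∀ v ∉ X, l v = 0) {z : Fin d → ℝ} (hz : ∀ c, ∑ v, l v * p v c = z c) :
    Stress G' (fun o : Option V => o.elim z p) (extWeight τ l) := by
  refine ⟨?_, ?_, fun c => ?_⟩
  · rintro (_ | i) (_ | j) <;> simp only [extWeight, optWeight]
    rw [h.avg_symm l i j, mul_comm]
    simp only [eq_comm]
  · rintro (_ | i) (_ | j) hij <;> simp only [extWeight, optWeight]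
    · exact hsupp j fun hj => hij ((hX j).mpr hj).symm
    · exact hsupp i fun hi => hij ((hX i).mpr hi)
    · split_ifs with e
      · rfl
      rw [sub_eq_zero, avg_apply]
      have h1 : ∀ a b, l a * l b / 2 * τ a b i j =
          (if a = i then (if b = j then l a * l b / 2 else 0) else 0) +
          (if a = j then (if b = i then l a * l b / 2 else 0) else 0) := by
        intro a b
        by_cases hab : a ∈ X ∧ b ∈ X ∧ a ≠ b
        · rw [(h.isTau a hab.1 b hab.2.1 hab.2.2).off i j e hij, pairWeight]
          by_cases e1 : a = i
          · subst e1
            by_cases e2 : b = j <;> simp [e, e2, Ne.symm hab.2.2]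
          · by_cases e2 : a = j
            · subst e2
              by_cases e3 : b = i <;> simp [e1, e3]
            · simp [e1, e2]
        · rw [h.zero a b hab]
          by_cases ha : a ∈ X
          · by_cases hb : b ∈ X
            · have hab' : a = b := by
                by_contra hn; exact hab ⟨ha, hb, hn⟩
              subst hab'
              by_cases e1 : a = i
              · subst e1; simp [e]
              · simp [e1]
            · simp [hsupp b hb]
          · simp [hsupp a ha]
      simp only [h1, Finset.sum_add_distrib, Finset.sum_ite_irrel, Finset.sum_const_zero,
        Finset.sum_ite_eq', Finset.mem_univ, if_true]
      ring
  · ext o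
    cases o with
    | none => rw [lap_extWeight_none τ hl]; simp [hz]
    | some i =>
      rw [lap_extWeight_some τ hl]
      have h1 : lap (avg τ l) (fun v => p v c) i = 0 := by
        rw [lap_avg]; simp [h.eq]
      simp [hz, h1]

/-- A kernel vector restricts to an element of `K`, and its value at the new vertex is the weighted mean
of this restriction. -/
theorem finrank_ker_extWeight {l : V → ℝ} (hl : ∑ v, l v = 1) {K : Submodule ℝ (V → ℝ)}
    (hg : Good τ X K l) :
    Module.finrank ℝ (LinearMap.ker (lap (extWeight τ l))) ≤ Module.finrank ℝ K := by
  have hker : ∀ y : Option V → ℝ, lap (extWeight τ l) y = 0 →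
      (fun v => y (some v)) ∈ K ∧ ∑ v, l v * y (some v) = y none := by
    intro y hy
    have h1 := form_extWeight τ hl y
    rw [form_of_lap_eq_zero hy] at h1
    have h2 := hg.nonneg fun v => y (some v)
    have h3 := sq_nonneg (∑ v, l v * y (some v) - y none)
    refine ⟨?_, ?_⟩
    · by_contra hn
      have := hg.pos _ hn
      linarith
    · have h4 : (∑ v, l v * y (some v) - y none) ^ 2 = 0 := by linarith
      exact sub_eq_zero.mp (pow_eq_zero_iff two_ne_zero |>.mp h4)
  let f : LinearMap.ker (lap (extWeight τ l)) →ₗ[ℝ] K :=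
    { toFun := fun y => ⟨fun v => y.1 (some v), (hker y.1 y.2).1⟩
      map_add' := fun y w => rfl
      map_smul' := fun t y => rfl }
  refine LinearMap.finrank_le_finrank_of_injective (f := f) ?_
  rw [← LinearMap.ker_eq_bot, LinearMap.ker_eq_bot']
  intro y hy
  have h1 : (fun v => y.1 (some v)) = 0 := congrArg Subtype.val hy
  have h2 := (hker y.1 y.2).2
  ext o
  cases o with
  | none => rw [← h2]; simp [fun v => congrFun h1 v]
  | some v => exact congrFun h1 v

/-- Sign and corank of the stress `τ` of `G = H + xy`, read off from a positive semidefinite stress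
of `G` of corank `d + 2`. -/
theorem exists_sign (hp : Gen p) (hX : X.card = d + 1) {H : SimpleGraph V}
    (hH : ∀ ω, Stress H p ω → ω = 0) {x y : V} (hxy : x ≠ y) (hnxy : ¬ H.Adj x y)
    {τ ω : V → V → ℝ} (hτ : IsTau H p x y τ) (hω : Stress (H ⊔ SimpleGraph.edge x y) p ω)
    (hpsd : (stressMatrix ω).PosSemidef) (hn : d + 2 ≤ Fintype.card V)
    (hrank : (stressMatrix ω).rank = Fintype.card V - d - 2) :
    ∃ s : ℝ, (s = 1 ∨ s = -1) ∧ (∀ w, 0 ≤ s * form τ w w) ∧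
      Module.finrank ℝ (LinearMap.ker (lap τ)) ≤ d + 2 := by
  have hdiag : ∀ i, ω i i = 0 := fun i => hω.2.1 i i (SimpleGraph.irrefl _)
  rw [stressMatrix_posSemidef_iff hdiag hω.1] at hpsd
  have hr := stressMatrix_rank hdiag
  have hspan := IsTau.span hH hτ hxy hnxy hω
  have sign : ∀ t : ℝ, ∃ s : ℝ, (s = 1 ∨ s = -1) ∧ 0 ≤ s * t := by
    intro t
    rcases le_total 0 t with h | h
    · exact ⟨1, Or.inl rfl, by linarith⟩
    · exact ⟨-1, Or.inr rfl, by linarith⟩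
  -- if `ω` vanishes then `|V| = d + 2`, and the form of `τ` lives on a quotient of dimension at most 1
  by_cases h0 : ω x y = 0
  · rw [h0, zero_smul] at hspan
    have hlap : lap ω = 0 := by
      rw [hspan]; ext y i; simp [lap_apply]
    rw [hlap, LinearMap.ker_zero, finrank_top, Module.finrank_pi] at hr
    have haff := finrank_affSpace hp hX
    obtain ⟨k, hk⟩ : ∃ k : V → ℝ, affSpace p ⊔ Submodule.span ℝ {k} = ⊤ := by
      by_cases ht : affSpace p = ⊤
      · exact ⟨0, by simp [ht]⟩
      · obtain ⟨k, -, hk⟩ := SetLike.exists_of_lt (lt_top_iff_ne_top.mpr ht)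
        refine ⟨k, Submodule.eq_top_of_finrank_eq ?_⟩
        have h1 : affSpace p < affSpace p ⊔ Submodule.span ℝ {k} :=
          lt_of_le_of_ne le_sup_left fun e => hk (by
            rw [e]
            exact (le_sup_right : _ ≤ affSpace p ⊔ _) (Submodule.mem_span_singleton_self k))
        have h2 := Submodule.finrank_lt_finrank_of_lt h1
        have h3 := Submodule.finrank_le (affSpace p ⊔ Submodule.span ℝ {k})
        rw [Module.finrank_pi] at h3 ⊢
        omega
    obtain ⟨s, hs, hst⟩ := sign (form τ k k)
    refine ⟨s, hs, fun w => ?_, ?_⟩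
    · obtain ⟨u, hu, v, hv, rfl⟩ := Submodule.mem_sup.mp (hk ▸ Submodule.mem_top : w ∈ _)
      obtain ⟨β, rfl⟩ := Submodule.mem_span_singleton.mp hv
      rw [form_add_of_lap_eq_zero hτ.symm (lap_of_mem_affSpace hτ.eq hu), form_smul_left,
        form_smul_right]
      have := mul_nonneg hst (mul_self_nonneg β)
      linarith
    · have := Submodule.finrank_le (LinearMap.ker (lap τ))
      rw [Module.finrank_pi] at this
      omega
  · have hker : LinearMap.ker (lap ω) = LinearMap.ker (lap τ) := by
      ext w
      rw [LinearMap.mem_ker, LinearMap.mem_ker, hspan, lap_smul, smul_eq_zero]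
      exact or_iff_right h0
    have hform : ∀ w, 0 ≤ ω x y * form τ w w := fun w => by
      have := hpsd w
      rwa [hspan, form_smul] at this
    obtain ⟨s, hs, hst⟩ := sign (ω x y)
    have hpos : 0 < s * ω x y := lt_of_le_of_ne hst
      (Ne.symm (mul_ne_zero (by rcases hs with rfl | rfl <;> norm_num) h0))
    have hss : s * s = 1 := by rcases hs with rfl | rfl <;> norm_num
    refine ⟨s, hs, fun w => ?_, ?_⟩
    · have h1 : (s * ω x y) * (s * form τ w w) = ω x y * form τ w w := by
        linear_combination (ω x y * form τ w w) * hss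
      exact nonneg_of_mul_nonneg_right (h1 ▸ hform w) hpos
    · rw [← hker]; omega

end Extension

/-! ### Existence of the generic framework -/

/-- Let G be a d-rigid graph with a generic framework (G,p) in ℝ^d having
a PSD equilibrium stress of rank |V| - d - 2.  Suppose G' is a d-rigid d-circuit obtained
from G by a d-dimensional 1-extension.  Then there exists a generic framework (G',p') in
ℝ^d with a PSD equilibrium stress of rank at least |V'| - d - 2. -/
theorem one_extension_preserves_psd_stress {V : Type*} [Fintype V] [DecidableEq V]
    (d : ℕ) (G : SimpleGraph V) (hrigid : IsRigidGraph d G)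
    (p : V → EuclideanSpace ℝ (Fin d)) (hp : Generic p)
    (ω : V → V → ℝ) (hω : IsEqStress G p ω) (hpsd : (stressMatrix ω).PosSemidef)
    (hrank : (stressMatrix ω).rank = Fintype.card V - d - 2)
    (G' : SimpleGraph (Option V))
    (hG'rigid : IsRigidGraph d G') (hG'circ : IsCircuitGraph d G')
    (hext : IsOneExtension d G G') :
    ∃ p' : Option V → EuclideanSpace ℝ (Fin d), Generic p' ∧
      ∃ ω' : Option V → Option V → ℝ, IsEqStress G' p' ω' ∧
        (stressMatrix ω').PosSemidef ∧
        Fintype.card (Option V) - d - 2 ≤ (stressMatrix ω').rank := by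
  obtain ⟨x, y, D, hGxy, hxD, hyD, hD, hadj, hnone⟩ := hext
  have hxy : x ≠ y := hGxy.ne
  obtain ⟨q, hq, hωq⟩ : ∃ q : V → Fin d → ℝ, Gen q ∧ Stress G q ω :=
    ⟨fun v c => p v c, hp, (stress_iff G p ω).mp hω⟩
  -- the conclusion in terms of coordinates and of the quadratic form of the stress
  suffices hmain : ∃ z : Fin d → ℝ, Gen (fun o : Option V => o.elim z q) ∧
      ∃ ω', Stress G' (fun o : Option V => o.elim z q) ω' ∧ (∀ w, 0 ≤ form ω' w w) ∧
        Fintype.card V ≤ d + 1 + (stressMatrix ω').rank by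
    obtain ⟨z, hz, ω', hs, hpos, hr⟩ := hmain
    refine ⟨fun o => WithLp.toLp 2 (o.elim z q), hz, ω', (stress_iff _ _ _).mpr hs,
      (stressMatrix_posSemidef_iff (fun i => hs.2.1 i i (SimpleGraph.irrefl _)) hs.1).mpr hpos, ?_⟩
    rw [Fintype.card_option]
    omega
  -- with so few vertices the required rank is zero
  by_cases hn : Fintype.card V ≤ d + 1
  · obtain ⟨z, -, hz⟩ := hq.extend isOpen_univ Set.univ_nonempty
    refine ⟨z, hz, 0, ⟨fun _ _ => rfl, fun _ _ _ => rfl, fun c => ?_⟩, fun w => ?_, by omega⟩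
    · ext i; simp [lap_apply]
    · simp [form, lap_apply]
  have hd : d ≠ 0 := by
    rintro rfl
    -- in `ℝ^0` the single edge from `x` to the new vertex is already dependent
    obtain ⟨z, -, hz⟩ := hq.extend isOpen_univ Set.univ_nonempty
    have hlt : SimpleGraph.edge (some x) none < G' := by
      refine lt_of_le_of_ne ?_ fun h => ?_
      · rw [SimpleGraph.edge_le_iff]
        exact Or.inr ((hnone x).mpr (Or.inl rfl))
      · have h1 := (hnone y).mpr (Or.inr (Or.inl rfl))
        rw [← h, SimpleGraph.edge_adj] at h1
        simp [hxy.symm] at h1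
    have h0 := (isIndepGraph_iff _).mp (hG'circ.2 _ hlt) _ hz (pairWeight (some x) none)
      ⟨fun i j => by unfold pairWeight; congr 1; apply propext; tauto, fun i j hij => ?_,
        fun c => c.elim0⟩
    · have := congrFun (congrFun h0 (some x)) none
      simp [pairWeight] at this
    · rw [pairWeight, if_neg]
      rintro (⟨rfl, rfl⟩ | ⟨rfl, rfl⟩) <;> exact hij (by simp [SimpleGraph.edge_adj])
  set X : Finset V := insert x (insert y D) with hXdef
  have hX : ∀ u, G'.Adj (some u) none ↔ u ∈ X := fun u => by
    rw [hnone u, hXdef, Finset.mem_insert, Finset.mem_insert]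
  have hcard : X.card = d + 1 := by
    rw [hXdef, Finset.card_insert_of_notMem (by simp [hxy, hxD]),
      Finset.card_insert_of_notMem hyD, hD]
    omega
  have hx : x ∈ X := Finset.mem_insert_self _ _
  have hy : y ∈ X := Finset.mem_insert_of_mem (Finset.mem_insert_self _ _)
  have hH := comap_indep hG'circ hX ⟨x, hx⟩ hq
  obtain ⟨τ, hτ⟩ := exists_isTauFamily (X := X) hH fun a ha b hb hab =>
    exists_isTau hG'circ hX hcard hq ha hb hab
  have hnxy : ¬ (G'.comap some).Adj x y := fun h => ((hadj x y).mp h).2 (Or.inl ⟨rfl, rfl⟩)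
  have hωH : Stress (G'.comap some ⊔ SimpleGraph.edge x y) q ω := by
    refine ⟨hωq.1, fun i j hij => hωq.2.1 i j fun h => hij ?_, hωq.2.2⟩
    rw [SimpleGraph.sup_adj, SimpleGraph.edge_adj]
    by_cases hc : (i = x ∧ j = y) ∨ (i = y ∧ j = x)
    · exact Or.inr ⟨hc, h.ne⟩
    · exact Or.inl ((hadj i j).mpr ⟨h, hc⟩)
  obtain ⟨s, hs, hpos, hdim⟩ := exists_sign hq hcard hH hxy hnxy (hτ.isTau x hx y hy hxy) hωH hpsd
    (by omega) hrank
  obtain ⟨K, hKdim, hK, l, hl⟩ := exists_good hq hcard hH hτ hx hy hxy hs hpos hdim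
  obtain ⟨L, hLc, hLX, hL1, hLz⟩ := exists_barycentric hq hcard
  -- normalise the weights to total `1` and read them as the barycentric coordinates of a point
  set σ := ∑ v, l v with hσ
  have hσ0 : σ ≠ 0 := hl.sum
  set l₁ : V → ℝ := σ⁻¹ • l with hl₁
  let z₁ : Fin d → ℝ := fun c => ∑ v, l₁ v * q v c
  have hl₁X : ∀ v ∉ X, l₁ v = 0 := fun v hv => by simp [hl₁, hl.supp v hv]
  have hLl : L z₁ = l₁ := by
    have hsub : ∀ f : V → ℝ, ∑ v ∈ X, (L z₁ v - l₁ v) * f v = ∑ v, (L z₁ v - l₁ v) * f v := fun f =>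
      Finset.sum_subset (Finset.subset_univ _) fun v _ hv => by rw [hLX _ v hv, hl₁X v hv]; simp
    have h1 := hq.affine hcard.le (w := fun v => L z₁ v - l₁ v)
      (by
        have := hsub fun _ => 1
        simp only [mul_one] at this
        rw [this, Finset.sum_sub_distrib, hL1]
        simp [hl₁, ← Finset.mul_sum, ← hσ, hσ0])
      (fun c => by
        rw [hsub]
        simp only [sub_mul, Finset.sum_sub_distrib, hLz]
        simp [z₁])
    ext v
    by_cases hv : v ∈ X
    · exact sub_eq_zero.mp (h1 v hv)
    · rw [hLX _ v hv, hl₁X v hv]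
  have hpos₁ : ∀ w ∉ K, 0 < form (avg τ (L z₁)) w w := fun w hw => by
    rw [hLl, hl₁, avg_smul, form_smul]
    exact mul_pos (mul_self_pos.mpr (inv_ne_zero hσ0)) (hl.pos w hw)
  have hker : ∀ l : V → ℝ, ∀ w ∈ K, lap (avg τ l) w = 0 := fun l w hw => by
    rw [lap_avg]
    simp [hK _ _ w hw]
  -- positivity persists near `z₁`, so the new vertex can be moved to a generic position
  have hev := eventually_pos_of_pos ((continuous_avg τ).comp hLc) (z₀ := z₁)
    (fun z => hτ.avg_symm _) (fun z => hker _) hpos₁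
  obtain ⟨U, hU, hUo, hzU⟩ := mem_nhds_iff.mp hev
  obtain ⟨z, hz, hgen⟩ := hq.extend hUo ⟨z₁, hzU⟩
  have hgood : Good τ X K (L z) :=
    ⟨hLX z, by rw [hL1]; exact one_ne_zero, hker _, hU hz⟩
  have hst := stress_extWeight hτ hX (hL1 z) (hLX z) (hLz z)
  refine ⟨z, hgen, extWeight τ (L z), hst, fun w => ?_, ?_⟩
  · rw [form_extWeight τ (hL1 z)]
    exact add_nonneg (hgood.nonneg _) (sq_nonneg _)
  · have h1 := stressMatrix_rank (ω := extWeight τ (L z))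
      fun i => hst.2.1 i i (SimpleGraph.irrefl _)
    have h2 := finrank_ker_extWeight (hL1 z) hgood
    rw [Fintype.card_option] at h1
    omega
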